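/- Assume none of p_1, p_2, q_1, q_2 is a root of unity. Then the polynomial extensions A_{p_1}(λ_1, μ_1, K_{q_1}[s_1,t_1])[w] and A_{p_2}(λ_2, μ_2, K_{q_2}[s_2,t_2])[w] are isomorphic as K-algebras if and only if one of the following four conditions holds: (i) p_1 = p_2, q_1 = q_2, λ_1 = λ_2, μ_1 = μ_2; (ii) p_1 = p_2⁻¹, q_1 = q_2, λ_1 = λ_2⁻¹, μ_1 = μ_2⁻¹; (iii) p_1 = p_2, q_1 = q_2⁻¹, λ_1 = μ_2, λ_2 = μ_1; (iv) p_1 = p_2⁻¹, q_1 = q_2⁻¹, λ_1 = μ_2⁻¹, λ_2 = μ_1⁻¹. -/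

import Mathlib

/-!
Write `z = xy - yx`. In `A = A_p(λ, μ, K_q[s,t])` one has `x z = p z x`, `z y = p y z`, and `z`
commutes with `s` and `t`. As `p ≠ 1`, `y = (p - 1)⁻¹ (z - 1) x⁻¹` after inverting `x`, so `A` maps
to the quantum torus `T` on `z, x, s, t`, realised as a twisted group algebra of `ℤ⁴`
(`EW.theta`). Comparing lowest terms of the spanning monomials `z^k x^n s^a t^b`,
`z^k y^n s^a t^b` shows that the map is injective (`EW.theta_injective`), and its image satisfies two
constraints: the exponents of `z, s, t` are nonnegative, and the components of negative degree in
`x` are divisible by `z - 1` (`EW.theta_mem_WW`).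

Since `p` and `q` are not roots of unity, a normal element of `A` has a single monomial as its image
in `T`; the constraints force it to be a multiple of `z^k s^a t^b` (`EW.normal_form`), and the center
of `A` is `K` (`EW.center_eq`).

* Cancellation. The center of `A[w]` is `K[w]`, so an isomorphism `A₁[w] ≅ A₂[w]` sends `w` to
  `a w + b` with `a ≠ 0`; dividing by `w` and `a w + b` gives `A₁ ≅ A₂`
  (`EW.nonempty_equiv_of_polynomial`).
* Lines. An isomorphism `A₁ ≅ A₂` preserves the monoid of normal elements, hence permutes the lines
  of its irreducible elements `z, s, t`; the line of `z` is fixed, being the only one that commutes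
  with the other two (`EW.map_zst`). After exchanging `s` and `t` in `A₂` if necessary (which
  replaces `(q₂, λ₂, μ₂)` by `(q₂⁻¹, μ₂, λ₂)`), all three lines are fixed.
* Parameters. Then `q₁ = q₂`. The commutation factors of the images of `x` and `y` with `z, s, t`
  equal those of monomials of `T`, which yields `n` with `p₁ = p₂^n`, `λ₁ = λ₂^n`, `μ₁ = μ₂^n`
  (`EW.params_of_std`); by symmetry `n = ±1`.

Conversely, the isomorphisms are generated by `s ↔ t` and by `x ↦ y`, `y ↦ -p⁻¹ x`.
-/

noncomputable section

open FreeAlgebra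

/-- Relations of the extended quantized Weyl algebra `A_p(lam, mu, K_q[s,t])`. -/
inductive ExtWeylRel (K : Type*) [Field K] (p q lam mu : K) :
    FreeAlgebra K (Fin 4) → FreeAlgebra K (Fin 4) → Prop
  | weyl : ExtWeylRel K p q lam mu (ι K (0 : Fin 4) * ι K 1 - p • (ι K 1 * ι K 0)) 1
  | st : ExtWeylRel K p q lam mu (ι K (2 : Fin 4) * ι K 3) (q • (ι K 3 * ι K 2))
  | sx : ExtWeylRel K p q lam mu (ι K (2 : Fin 4) * ι K 0) (lam • (ι K 0 * ι K 2))
  | sy : ExtWeylRel K p q lam mu (ι K (2 : Fin 4) * ι K 1) (lam⁻¹ • (ι K 1 * ι K 2))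
  | tx : ExtWeylRel K p q lam mu (ι K (3 : Fin 4) * ι K 0) (mu • (ι K 0 * ι K 3))
  | ty : ExtWeylRel K p q lam mu (ι K (3 : Fin 4) * ι K 1) (mu⁻¹ • (ι K 1 * ι K 3))

/-- The extended quantized Weyl algebra `A_p(lam, mu, K_q[s,t])`. -/
abbrev ExtWeyl (K : Type*) [Field K] (p q lam mu : K) : Type _ :=
  RingQuot (ExtWeylRel K p q lam mu)

/-! ### Twisted group algebras -/

/-- A bimultiplicative map `G × G → Kˣ`, used as a 2-cocycle. -/
structure Bichar (G K : Type*) [AddCommGroup G] [Field K] where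
  /-- the underlying function -/
  toFun : G → G → Kˣ
  add_left : ∀ a b c, toFun (a + b) c = toFun a c * toFun b c
  add_right : ∀ a b c, toFun a (b + c) = toFun a b * toFun a c

/-- The twisted group algebra: basis `e_g` (`g : G`), product `e_g e_h = β(g,h) e_{g+h}`. -/
def Tw {G K : Type*} [AddCommGroup G] [Field K] (_β : Bichar G K) : Type _ := G →₀ K

namespace Tw

variable {G K : Type*} [AddCommGroup G] [Field K] {β : Bichar G K}

lemma bichar_zero_left (β : Bichar G K) (a : G) : β.toFun 0 a = 1 := by
  have := β.add_left 0 0 a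
  simpa using this

lemma bichar_zero_right (β : Bichar G K) (a : G) : β.toFun a 0 = 1 := by
  have := β.add_right a 0 0
  simpa using this

instance : AddCommGroup (Tw β) := inferInstanceAs (AddCommGroup (G →₀ K))
instance : Module K (Tw β) := inferInstanceAs (Module K (G →₀ K))

/-- The coefficient of `e_g`. -/
def coeff (f : Tw β) (g : G) : K := (show G →₀ K from f) g

/-- The element `c e_g`. -/
def mono (g : G) (c : K) : Tw β := Finsupp.single g c

/-- The product as a bilinear map on coefficient functions. -/
def mulLin (β : Bichar G K) : (G →₀ K) →ₗ[K] (G →₀ K) →ₗ[K] (G →₀ K) :=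
  Finsupp.lsum K fun g => LinearMap.toSpanSingleton K _
    (Finsupp.lsum K fun h =>
      LinearMap.toSpanSingleton K (G →₀ K) (Finsupp.single (g + h) (β.toFun g h : K)))

lemma mulLin_single (β : Bichar G K) (g h : G) (a b : K) :
    mulLin β (Finsupp.single g a) (Finsupp.single h b) =
      Finsupp.single (g + h) (a * b * β.toFun g h) := by
  simp [mulLin, LinearMap.toSpanSingleton_apply, -Finsupp.single_mul, mul_assoc]

instance : Mul (Tw β) := ⟨fun f g => mulLin β f g⟩
instance : One (Tw β) := ⟨mono 0 1⟩

lemma one_def : (1 : Tw β) = mono 0 1 := rfl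

lemma smul_mono (a : K) (g : G) (c : K) : a • (mono g c : Tw β) = mono g (a * c) :=
  Finsupp.smul_single' a g c

lemma mono_mul_mono (g h : G) (a b : K) :
    (mono g a * mono h b : Tw β) = mono (g + h) (a * b * β.toFun g h) :=
  mulLin_single β g h a b

@[elab_as_elim]
lemma induction_mono {P : Tw β → Prop} (f : Tw β) (h0 : P 0)
    (hs : ∀ g c, P (mono g c)) (ha : ∀ f g, P f → P g → P (f + g)) : P f :=
  Finsupp.induction_linear (motive := P) f h0 (fun f g hf hg => ha f g hf hg) hs

lemma mul_add' (a b c : Tw β) : a * (b + c) = a * b + a * c := (mulLin β a).map_add b c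
lemma add_mul' (a b c : Tw β) : (a + b) * c = a * c + b * c :=
  (mulLin β).map_add₂ a b c
lemma zero_mul' (a : Tw β) : 0 * a = 0 := (mulLin β).map_zero₂ a
lemma mul_zero' (a : Tw β) : a * 0 = 0 := (mulLin β a).map_zero

instance : Ring (Tw β) :=
  { (inferInstance : AddCommGroup (Tw β)), (inferInstance : Mul (Tw β)),
    (inferInstance : One (Tw β)) with
    left_distrib := mul_add'
    right_distrib := add_mul'
    zero_mul := zero_mul'
    mul_zero := mul_zero'
    mul_assoc := fun a b c => by
      induction a using induction_mono with
      | h0 => simp only [zero_mul']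
      | ha f g hf hg => simp only [add_mul', hf, hg]
      | hs g x =>
        induction b using induction_mono with
        | h0 => simp only [zero_mul', mul_zero']
        | ha f g hf hg => simp only [add_mul', mul_add', hf, hg]
        | hs h y =>
          induction c using induction_mono with
          | h0 => simp only [mul_zero']
          | ha f g hf hg => simp only [mul_add', hf, hg]
          | hs i z =>
            simp only [mono_mul_mono, add_assoc, β.add_left, β.add_right, Units.val_mul]
            congr 1; ring
    one_mul := fun a => by
      induction a using induction_mono with
      | h0 => simp only [mul_zero']
      | ha f g hf hg => simp only [mul_add', hf, hg]
      | hs g x => simp [one_def, mono_mul_mono, bichar_zero_left]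
    mul_one := fun a => by
      induction a using induction_mono with
      | h0 => simp only [zero_mul']
      | ha f g hf hg => simp only [add_mul', hf, hg]
      | hs g x => simp [one_def, mono_mul_mono, bichar_zero_right] }

instance : Algebra K (Tw β) := Algebra.ofModule
  (fun r x y => (mulLin β).map_smul₂ r x y)
  (fun r x y => (mulLin β x).map_smul r y)

lemma algebraMap_eq (c : K) : algebraMap K (Tw β) c = mono 0 c := by
  rw [Algebra.algebraMap_eq_smul_one, one_def, smul_mono, mul_one]

@[ext] lemma ext_coeff {f g : Tw β} (h : ∀ d, f.coeff d = g.coeff d) : f = g := Finsupp.ext h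

@[simp] lemma coeff_add (f g : Tw β) (d : G) : (f + g).coeff d = f.coeff d + g.coeff d := rfl
@[simp] lemma coeff_sub (f g : Tw β) (d : G) : (f - g).coeff d = f.coeff d - g.coeff d := rfl
@[simp] lemma coeff_zero (d : G) : (0 : Tw β).coeff d = 0 := rfl
@[simp] lemma coeff_smul (c : K) (f : Tw β) (d : G) : (c • f).coeff d = c * f.coeff d := rfl
lemma coeff_mono [DecidableEq G] (g : G) (c : K) (d : G) :
    (mono g c : Tw β).coeff d = if g = d then c else 0 := by
  classical
  change (Finsupp.single g c) d = _
  rw [Finsupp.single_apply]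

lemma coeff_mono_mul (g : G) (c : K) (f : Tw β) (d : G) :
    (mono g c * f).coeff (g + d) = c * f.coeff d * β.toFun g d := by
  classical
  induction f using induction_mono with
  | h0 => simp
  | ha f g hf hg => rw [mul_add, coeff_add, hf, hg, coeff_add]; ring
  | hs h y =>
    rw [mono_mul_mono, coeff_mono, coeff_mono]
    by_cases hd : h = d
    · simp [hd]
    · simp [hd]

lemma coeff_mul_mono (g : G) (c : K) (f : Tw β) (d : G) :
    (f * mono g c).coeff (d + g) = c * f.coeff d * β.toFun d g := by
  classical
  induction f using induction_mono with
  | h0 => simp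
  | ha f g hf hg => rw [add_mul, coeff_add, hf, hg, coeff_add]; ring
  | hs h y =>
    rw [mono_mul_mono, coeff_mono, coeff_mono]
    by_cases hd : h = d
    · simp [hd]; ring
    · simp [hd]

section Lead

set_option linter.unusedSectionVars false

variable {L : Type*} [AddCommGroup L] [LinearOrder L] [IsOrderedAddMonoid L]

/-- `e_d` is the leading monomial of `f` for the order on `G` induced by `l : G →+ L`. -/
def IsLead (l : G →+ L) (f : Tw β) (d : G) : Prop :=
  f.coeff d ≠ 0 ∧ ∀ e, f.coeff e ≠ 0 → l e ≤ l d

lemma exists_isLead (l : G →+ L) {f : Tw β} (hf : f ≠ 0) : ∃ d, IsLead l f d := by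
  have hs : (show G →₀ K from f).support.Nonempty := Finsupp.support_nonempty_iff.mpr hf
  obtain ⟨d, hd, hm⟩ := Finset.exists_max_image _ l hs
  exact ⟨d, Finsupp.mem_support_iff.mp hd, fun e he => hm e (Finsupp.mem_support_iff.mpr he)⟩

lemma IsLead.unique {l : G →+ L} (hl : Function.Injective l) {f : Tw β} {d e : G}
    (hd : IsLead l f d) (he : IsLead l f e) : d = e :=
  hl (le_antisymm (he.2 _ hd.1) (hd.2 _ he.1))

lemma isLead_mono (l : G →+ L) {d : G} {c : K} (hc : c ≠ 0) :
    IsLead l (mono d c : Tw β) d := by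
  classical
  refine ⟨by simpa [coeff_mono] using hc, fun e he => ?_⟩
  rw [coeff_mono] at he
  by_cases h : d = e
  · rw [h]
  · simp [h] at he

lemma coeff_mul (f g : Tw β) (d : G) :
    (f * g).coeff d = (show G →₀ K from f).sum fun a x => x * g.coeff (d - a) * β.toFun a (d - a) := by
  classical
  have hlin : ∀ f : Tw β, (f * g).coeff d = (show G →₀ K from f).sum
      fun a x => x * g.coeff (d - a) * β.toFun a (d - a) := by
    intro f
    induction f using induction_mono with
    | h0 => rw [zero_mul]; exact (Finsupp.sum_zero_index (h := fun a x => _)).symm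
    | ha f₁ f₂ hf₁ hf₂ =>
      rw [add_mul, coeff_add, hf₁, hf₂]
      exact (Finsupp.sum_add_index'
        (h := fun a x => x * g.coeff (d - a) * (β.toFun a (d - a) : K))
        (fun a => by rw [zero_mul, zero_mul]) (fun a x y => by ring)).symm
    | hs a x =>
      have h1 := coeff_mono_mul (β := β) a x g (d - a)
      rw [add_sub_cancel] at h1
      rw [h1]
      exact (Finsupp.sum_single_index
        (h := fun a x => x * g.coeff (d - a) * (β.toFun a (d - a) : K))
        (by rw [zero_mul, zero_mul])).symm
  exact hlin f

lemma IsLead.mul {l : G →+ L} (hl : Function.Injective l) {f g : Tw β} {a b : G}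
    (hf : IsLead l f a) (hg : IsLead l g b) : IsLead l (f * g) (a + b) := by
  constructor
  · rw [coeff_mul, Finsupp.sum, Finset.sum_eq_single a]
    · rw [add_sub_cancel_left]
      exact mul_ne_zero (mul_ne_zero hf.1 hg.1) (Units.ne_zero _)
    · intro c hc hca
      have h1 : l c ≤ l a := hf.2 c (Finsupp.mem_support_iff.mp hc)
      have h2 : l c < l a := lt_of_le_of_ne h1 fun h => hca (hl h)
      have h3 : g.coeff (a + b - c) = 0 := by
        by_contra h
        have h4 := hg.2 _ h
        rw [map_sub, map_add] at h4
        have : l a + l b ≤ l b + l c := sub_le_iff_le_add.mp h4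
        rw [add_comm (l b)] at this
        exact absurd (le_of_add_le_add_right this) (not_le.mpr h2)
      rw [h3]; ring
    · intro h
      exact absurd (Finsupp.mem_support_iff.mpr hf.1) h
  · intro e he
    rw [coeff_mul, Finsupp.sum] at he
    obtain ⟨c, hc, hne⟩ := Finset.exists_ne_zero_of_sum_ne_zero he
    have h1 : l c ≤ l a := hf.2 c (Finsupp.mem_support_iff.mp hc)
    have h2 : g.coeff (e - c) ≠ 0 := by
      intro h; rw [h] at hne; simp at hne
    have h3 := hg.2 _ h2
    have := add_le_add h1 h3
    rwa [map_sub, add_sub_cancel, ← map_add] at this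

lemma isLead_one (l : G →+ L) : IsLead l (1 : Tw β) 0 := isLead_mono l one_ne_zero

lemma IsLead.pow {l : G →+ L} (hl : Function.Injective l) {f : Tw β} {a : G}
    (hf : IsLead l f a) (n : ℕ) : IsLead l (f ^ n) (n • a) := by
  induction n with
  | zero => simpa using isLead_one l
  | succ n ih => rw [pow_succ, succ_nsmul]; exact ih.mul hl hf

/-- If `f e_d = g f` with `f ≠ 0`, comparing both extreme monomials shows `g ∈ K e_d`, and
hence `e_d` has the same commutation factor with all monomials of `f`. -/
lemma commutation_of_normal {l : G →+ L} (hl : Function.Injective l) {f g : Tw β} {d : G}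
    (hf : f ≠ 0) (h : f * mono d 1 = g * f) :
    ∃ c : K, ∀ e, f.coeff e ≠ 0 → (β.toFun e d : K) = c * β.toFun d e := by
  classical
  have key : ∀ l' : G →+ L, Function.Injective l' → g ≠ 0 → IsLead l' g d := by
    intro l' hl' hg
    obtain ⟨a, ha⟩ := exists_isLead l' hf
    obtain ⟨b, hb⟩ := exists_isLead l' hg
    have h1 := ha.mul hl' (isLead_mono (β := β) l' (one_ne_zero (α := K)) (d := d))
    have h2 := hb.mul hl' ha
    rw [h] at h1
    have h3 := h1.unique hl' h2
    rw [add_comm] at h3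
    rw [add_right_cancel h3]; exact hb
  have hg : g ≠ 0 := by
    rintro rfl
    obtain ⟨a, ha⟩ := exists_isLead l hf
    have h1 := (ha.mul hl (isLead_mono (β := β) l (one_ne_zero (α := K)) (d := d))).1
    rw [h] at h1; simp at h1
  have k1 := key l hl hg
  have k2 := key (-l) (fun a b hab => hl (by simpa using hab)) hg
  have hgm : g = mono d (g.coeff d) := by
    ext e
    rw [coeff_mono]
    by_cases he : d = e
    · simp [he]
    · rw [if_neg he]
      by_contra hne
      refine he (hl (le_antisymm ?_ (k1.2 e hne)))
      have := k2.2 e hne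
      simpa using this
  refine ⟨g.coeff d, fun e he => ?_⟩
  have h1 := coeff_mul_mono d 1 f e
  rw [h, hgm, add_comm e d, coeff_mono_mul] at h1
  have : f.coeff e * (β.toFun e d : K) = f.coeff e * (g.coeff d * β.toFun d e) := by
    rw [one_mul] at h1; rw [← h1]; ring
  exact mul_left_cancel₀ he this

end Lead
end Tw

/-! ### The algebra `A_p(λ, μ, K_q[s,t])` -/

section Commutation

variable {K A : Type*} [Field K] [Ring A] [Algebra K A]

lemma mul_pow_of_qcomm {u v : A} {c : K} (h : u * v = c • (v * u)) (n : ℕ) :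
    u * v ^ n = c ^ n • (v ^ n * u) := by
  induction n with
  | zero => simp
  | succ n ih =>
    rw [pow_succ, ← mul_assoc, ih, smul_mul_assoc, mul_assoc, h, mul_smul_comm, smul_smul,
      ← mul_assoc, pow_succ]

lemma mul_mul_of_qcomm {u v w : A} {c d : K} (hv : u * v = c • (v * u))
    (hw : u * w = d • (w * u)) : u * (v * w) = (c * d) • (v * w * u) := by
  rw [← mul_assoc, hv, smul_mul_assoc, mul_assoc, hw, mul_smul_comm, smul_smul, mul_assoc]

lemma qcomm_symm {u v : A} {c : K} (hc : c ≠ 0) (h : u * v = c • (v * u)) :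
    v * u = c⁻¹ • (u * v) := by
  rw [h, smul_smul, inv_mul_cancel₀ hc, one_smul]

end Commutation

namespace EW

variable {K : Type*} [Field K]

/-- The algebra for invertible parameters, sealed so that its ring structure is found through
a single instance path. -/
def E (p q l m : Kˣ) : Type _ := ExtWeyl K (p : K) (q : K) (l : K) (m : K)

instance (p q l m : Kˣ) : Ring (E p q l m) :=
  inferInstanceAs (Ring (ExtWeyl K (p : K) (q : K) (l : K) (m : K)))

instance (p q l m : Kˣ) : Algebra K (E p q l m) :=
  inferInstanceAs (Algebra K (ExtWeyl K (p : K) (q : K) (l : K) (m : K)))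

section gens
variable (p q l m : Kˣ)

/-- The quotient map from the free algebra. -/
def mk : FreeAlgebra K (Fin 4) →ₐ[K] E p q l m :=
  RingQuot.mkAlgHom K (ExtWeylRel K (p : K) q l m)

/-- The generator `x`. -/
def gx : E p q l m := mk p q l m (ι K 0)
/-- The generator `y`. -/
def gy : E p q l m := mk p q l m (ι K 1)
/-- The generator `s`. -/
def gs : E p q l m := mk p q l m (ι K 2)
/-- The generator `t`. -/
def gt : E p q l m := mk p q l m (ι K 3)
/-- The normal element `z = xy - yx`. -/
def gz : E p q l m := gx p q l m * gy p q l m - gy p q l m * gx p q l m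

variable {p q l m}

lemma mk_rel {a b : FreeAlgebra K (Fin 4)} (h : ExtWeylRel K (p : K) q l m a b) :
    mk p q l m a = mk p q l m b := RingQuot.mkAlgHom_rel K h

lemma x_mul_y : gx p q l m * gy p q l m = 1 + (p : K) • (gy p q l m * gx p q l m) := by
  have := mk_rel (ExtWeylRel.weyl (K := K) (p := (p : K)) (q := q) (lam := l) (mu := m))
  rw [map_sub, map_mul, map_smul, map_mul, map_one] at this
  exact sub_eq_iff_eq_add.mp this

lemma s_mul_t : gs p q l m * gt p q l m = (q : K) • (gt p q l m * gs p q l m) := by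
  have := mk_rel (ExtWeylRel.st (K := K) (p := (p : K)) (q := q) (lam := l) (mu := m))
  rwa [map_mul, map_smul, map_mul] at this

lemma s_mul_x : gs p q l m * gx p q l m = (l : K) • (gx p q l m * gs p q l m) := by
  have := mk_rel (ExtWeylRel.sx (K := K) (p := (p : K)) (q := q) (lam := l) (mu := m))
  rwa [map_mul, map_smul, map_mul] at this

lemma s_mul_y : gs p q l m * gy p q l m = (l : K)⁻¹ • (gy p q l m * gs p q l m) := by
  have := mk_rel (ExtWeylRel.sy (K := K) (p := (p : K)) (q := q) (lam := l) (mu := m))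
  rwa [map_mul, map_smul, map_mul] at this

lemma t_mul_x : gt p q l m * gx p q l m = (m : K) • (gx p q l m * gt p q l m) := by
  have := mk_rel (ExtWeylRel.tx (K := K) (p := (p : K)) (q := q) (lam := l) (mu := m))
  rwa [map_mul, map_smul, map_mul] at this

lemma t_mul_y : gt p q l m * gy p q l m = (m : K)⁻¹ • (gy p q l m * gt p q l m) := by
  have := mk_rel (ExtWeylRel.ty (K := K) (p := (p : K)) (q := q) (lam := l) (mu := m))
  rwa [map_mul, map_smul, map_mul] at this

lemma t_mul_s : gt p q l m * gs p q l m = (q : K)⁻¹ • (gs p q l m * gt p q l m) :=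
  qcomm_symm q.ne_zero s_mul_t

lemma x_mul_z : gx p q l m * gz p q l m = (p : K) • (gz p q l m * gx p q l m) := by
  have h1 : gx p q l m * gz p q l m =
      gx p q l m * (gx p q l m * gy p q l m) - gx p q l m * gy p q l m * gx p q l m := by
    rw [gz, mul_sub, mul_assoc]
  rw [h1]
  conv_lhs => rw [x_mul_y]
  rw [gz, mul_add, add_mul, mul_one, one_mul, add_sub_add_left_eq_sub, mul_smul_comm,
    smul_mul_assoc, ← smul_sub, sub_mul, mul_assoc, mul_assoc]

lemma z_mul_y : gz p q l m * gy p q l m = (p : K) • (gy p q l m * gz p q l m) := by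
  have h1 : gz p q l m * gy p q l m =
      gx p q l m * gy p q l m * gy p q l m - gy p q l m * (gx p q l m * gy p q l m) := by
    rw [gz, sub_mul, mul_assoc (gy p q l m)]
  rw [h1]
  conv_lhs => rw [x_mul_y]
  rw [gz, mul_add, add_mul, mul_one, one_mul, add_sub_add_left_eq_sub, mul_smul_comm,
    smul_mul_assoc, ← smul_sub, mul_sub, mul_assoc]

lemma y_mul_z : gy p q l m * gz p q l m = (p : K)⁻¹ • (gz p q l m * gy p q l m) :=
  qcomm_symm p.ne_zero z_mul_y

lemma z_mul_x : gz p q l m * gx p q l m = (p : K)⁻¹ • (gx p q l m * gz p q l m) :=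
  qcomm_symm p.ne_zero x_mul_z

lemma s_mul_z : gs p q l m * gz p q l m = gz p q l m * gs p q l m := by
  have h1 := mul_mul_of_qcomm (s_mul_x (p := p) (q := q) (l := l) (m := m)) s_mul_y
  have h2 := mul_mul_of_qcomm (s_mul_y (p := p) (q := q) (l := l) (m := m)) s_mul_x
  rw [mul_inv_cancel₀ l.ne_zero, one_smul] at h1
  rw [inv_mul_cancel₀ l.ne_zero, one_smul] at h2
  rw [gz, mul_sub, sub_mul, h1, h2]

lemma t_mul_z : gt p q l m * gz p q l m = gz p q l m * gt p q l m := by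
  have h1 := mul_mul_of_qcomm (t_mul_x (p := p) (q := q) (l := l) (m := m)) t_mul_y
  have h2 := mul_mul_of_qcomm (t_mul_y (p := p) (q := q) (l := l) (m := m)) t_mul_x
  rw [mul_inv_cancel₀ m.ne_zero, one_smul] at h1
  rw [inv_mul_cancel₀ m.ne_zero, one_smul] at h2
  rw [gz, mul_sub, sub_mul, h1, h2]

lemma y_mul_x (hp : (p : K) ≠ 1) :
    gy p q l m * gx p q l m = ((p : K) - 1)⁻¹ • (gz p q l m - 1) := by
  have : gz p q l m - 1 = ((p : K) - 1) • (gy p q l m * gx p q l m) := by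
    rw [gz, x_mul_y, sub_smul, one_smul]; abel
  rw [this, smul_smul, inv_mul_cancel₀ (sub_ne_zero.mpr hp), one_smul]

lemma x_mul_y' (hp : (p : K) ≠ 1) :
    gx p q l m * gy p q l m = ((p : K) - 1)⁻¹ • ((p : K) • gz p q l m - 1) := by
  have : (p : K) • gz p q l m - 1 = ((p : K) - 1) • (gx p q l m * gy p q l m) := by
    have h : gz p q l m = gx p q l m * gy p q l m - gy p q l m * gx p q l m := rfl
    rw [h, smul_sub, sub_sub, add_comm, ← x_mul_y, sub_smul, one_smul]
  rw [this, smul_smul, inv_mul_cancel₀ (sub_ne_zero.mpr hp), one_smul]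

@[elab_as_elim]
lemma induction_gens {P : E p q l m → Prop} (a : E p q l m)
    (hc : ∀ c : K, P (algebraMap K _ c))
    (hx : P (gx p q l m)) (hy : P (gy p q l m)) (hs : P (gs p q l m)) (ht : P (gt p q l m))
    (hadd : ∀ a b, P a → P b → P (a + b)) (hmul : ∀ a b, P a → P b → P (a * b)) : P a := by
  obtain ⟨a, rfl⟩ := RingQuot.mkAlgHom_surjective K (ExtWeylRel K (p : K) q l m) a
  change P (mk p q l m a)
  induction a using FreeAlgebra.induction with
  | grade0 r => rw [AlgHom.commutes]; exact hc r
  | grade1 i => fin_cases i <;> assumption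
  | mul a b ha hb => rw [map_mul]; exact hmul _ _ ha hb
  | add a b ha hb => rw [map_add]; exact hadd _ _ ha hb

/-- The universal property of the defining presentation. -/
def lift {B : Type*} [Ring B] [Algebra K B] (X Y S T : B)
    (hxy : X * Y - (p : K) • (Y * X) = 1) (hst : S * T = (q : K) • (T * S))
    (hsx : S * X = (l : K) • (X * S)) (hsy : S * Y = (l : K)⁻¹ • (Y * S))
    (htx : T * X = (m : K) • (X * T)) (hty : T * Y = (m : K)⁻¹ • (Y * T)) :
    E p q l m →ₐ[K] B :=
  RingQuot.liftAlgHom K (s := ExtWeylRel K (p : K) q l m) ⟨FreeAlgebra.lift K ![X, Y, S, T], by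
    intro a b h
    cases h <;> simp <;> assumption⟩

section liftlemmas
variable {B : Type*} [Ring B] [Algebra K B] {X Y S T : B}
    {hxy : X * Y - (p : K) • (Y * X) = 1} {hst : S * T = (q : K) • (T * S)}
    {hsx : S * X = (l : K) • (X * S)} {hsy : S * Y = (l : K)⁻¹ • (Y * S)}
    {htx : T * X = (m : K) • (X * T)} {hty : T * Y = (m : K)⁻¹ • (Y * T)}

lemma lift_x : lift X Y S T hxy hst hsx hsy htx hty (gx p q l m) = X := by
  exact (RingQuot.liftAlgHom_mkAlgHom_apply K _ _ _).trans (by simp)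
lemma lift_y : lift X Y S T hxy hst hsx hsy htx hty (gy p q l m) = Y := by
  exact (RingQuot.liftAlgHom_mkAlgHom_apply K _ _ _).trans (by simp)
lemma lift_s : lift X Y S T hxy hst hsx hsy htx hty (gs p q l m) = S := by
  exact (RingQuot.liftAlgHom_mkAlgHom_apply K _ _ _).trans (by simp)
lemma lift_t : lift X Y S T hxy hst hsx hsy htx hty (gt p q l m) = T := by
  exact (RingQuot.liftAlgHom_mkAlgHom_apply K _ _ _).trans (by simp)
end liftlemmas

lemma hom_ext {B : Type*} [Ring B] [Algebra K B] {f g : E p q l m →ₐ[K] B}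
    (hx : f (gx p q l m) = g (gx p q l m)) (hy : f (gy p q l m) = g (gy p q l m))
    (hs : f (gs p q l m) = g (gs p q l m)) (ht : f (gt p q l m) = g (gt p q l m)) : f = g := by
  refine AlgHom.ext fun a => ?_
  induction a using induction_gens with
  | hc c => simp
  | hx => exact hx
  | hy => exact hy
  | hs => exact hs
  | ht => exact ht
  | hadd a b ha hb => rw [map_add, map_add, ha, hb]
  | hmul a b ha hb => rw [map_mul, map_mul, ha, hb]

/-- Exchanging `s` and `t`. -/
def swapST {p q q' l m : Kˣ} (h : q' = q⁻¹) : E p q l m →ₐ[K] E p q' m l :=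
  lift (gx _ _ _ _) (gy _ _ _ _) (gt _ _ _ _) (gs _ _ _ _)
    (by rw [x_mul_y]; abel) (by rw [t_mul_s]; simp [h]) t_mul_x t_mul_y s_mul_x s_mul_y

/-- `swapST` is invertible. -/
def swapSTEquiv {p q q' l m : Kˣ} (h : q' = q⁻¹) : E p q l m ≃ₐ[K] E p q' m l :=
  AlgEquiv.ofAlgHom (swapST h) (swapST (by rw [h, inv_inv]))
    (hom_ext (by simp [swapST, lift_x]) (by simp [swapST, lift_y])
      (by simp [swapST, lift_s, lift_t]) (by simp [swapST, lift_s, lift_t]))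
    (hom_ext (by simp [swapST, lift_x]) (by simp [swapST, lift_y])
      (by simp [swapST, lift_s, lift_t]) (by simp [swapST, lift_s, lift_t]))

/-- Exchanging `x` and `y`, up to a scalar: `x ↦ y`, `y ↦ -p⁻¹ x`. -/
def swapXY {p p' q l l' m m' : Kˣ} (hp : p' = p⁻¹) (hl : l' = l⁻¹) (hm : m' = m⁻¹) :
    E p q l m →ₐ[K] E p' q l' m' :=
  lift (gy _ _ _ _) ((-(p : K)⁻¹) • gx _ _ _ _) (gs _ _ _ _) (gt _ _ _ _)
    (by
      subst hp hl hm
      rw [mul_smul_comm, smul_mul_assoc, x_mul_y, smul_smul, mul_neg, mul_inv_cancel₀ p.ne_zero]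
      simp)
    s_mul_t (by rw [s_mul_y]; simp [hl])
    (by rw [mul_smul_comm, s_mul_x, smul_mul_assoc, smul_comm]; simp [hl])
    (by rw [t_mul_y]; simp [hm])
    (by rw [mul_smul_comm, t_mul_x, smul_mul_assoc, smul_comm]; simp [hm])

/-- `swapXY` is invertible; its inverse is `x ↦ -p y`, `y ↦ x`. -/
def swapXYEquiv {p p' q l l' m m' : Kˣ} (hp : p' = p⁻¹) (hl : l' = l⁻¹) (hm : m' = m⁻¹) :
    E p q l m ≃ₐ[K] E p' q l' m' :=
  AlgEquiv.ofAlgHom (swapXY hp hl hm)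
    (lift ((-(p : K)) • gy _ _ _ _) (gx _ _ _ _) (gs _ _ _ _) (gt _ _ _ _)
      (by
        subst hp hl hm
        rw [mul_smul_comm, smul_mul_assoc, x_mul_y, smul_smul, mul_neg, Units.val_inv_eq_inv_val,
          inv_mul_cancel₀ p.ne_zero]
        simp)
      s_mul_t (by rw [mul_smul_comm, s_mul_y, smul_mul_assoc, smul_comm]; simp [hl])
      (by rw [s_mul_x]; simp [hl])
      (by rw [mul_smul_comm, t_mul_y, smul_mul_assoc, smul_comm]; simp [hm])
      (by rw [t_mul_x]; simp [hm]))
    (hom_ext (by simp [swapXY, lift_x, lift_y]) (by simp [swapXY, lift_x, lift_y])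
      (by simp [swapXY, lift_s]) (by simp [swapXY, lift_t]))
    (hom_ext (by simp [swapXY, lift_x, lift_y]) (by simp [swapXY, lift_x, lift_y])
      (by simp [swapXY, lift_s]) (by simp [swapXY, lift_t]))

end gens
end EW

/-! ### Embedding into a quantum torus -/

namespace EW

variable {K : Type*} [Field K]

/-- Exponents `(k, n, a, b)` of the monomials `z^k x^n s^a t^b`. -/
abbrev Ex : Type := ℤ × ℤ × ℤ × ℤ

/-- The cocycle of the quantum torus on `z, x, s, t` with monomials `z^k x^n s^a t^b`. -/
def qb (p q l m : Kˣ) : Bichar Ex K where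
  toFun d e := p ^ (d.2.1 * e.1) * l ^ (d.2.2.1 * e.2.1) * m ^ (d.2.2.2 * e.2.1) *
    q ^ (-(d.2.2.2 * e.2.2.1))
  add_left a b c := by
    simp only [Prod.fst_add, Prod.snd_add, add_mul, neg_add, zpow_add]
    ac_rfl
  add_right a b c := by
    simp only [Prod.fst_add, Prod.snd_add, mul_add, neg_add, zpow_add]
    ac_rfl

lemma qb_apply (p q l m : Kˣ) (k n a b k' n' a' b' : ℤ) :
    (qb p q l m).toFun (k, n, a, b) (k', n', a', b') =
      p ^ (n * k') * l ^ (a * n') * m ^ (b * n') * q ^ (-(b * a')) := rfl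

/-- The quantum torus with commutation relations those of `z, x, s, t`. -/
abbrev QT (p q l m : Kˣ) : Type _ := Tw (qb p q l m)

/-- The lexicographic order on exponents, as an additive embedding. -/
def lexHom : Ex →+ (ℤ ×ₗ ℤ ×ₗ ℤ ×ₗ ℤ) where
  toFun d := toLex (d.1, toLex (d.2.1, toLex (d.2.2.1, d.2.2.2)))
  map_zero' := rfl
  map_add' _ _ := rfl

lemma lexHom_injective : Function.Injective lexHom := by
  rintro ⟨k, n, a, b⟩ ⟨k', n', a', b'⟩ h
  exact h

lemma neg_lexHom_injective : Function.Injective (-lexHom) := fun a b h =>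
  lexHom_injective (by simpa using h)

section theta
variable {p q l m : Kˣ}
open Tw

/-- The image of `y`, namely `(p - 1)⁻¹ (z - 1) x⁻¹`. -/
def ty (p q l m : Kˣ) : QT p q l m :=
  mono (1, -1, 0, 0) ((p : K) - 1)⁻¹ - mono (0, -1, 0, 0) ((p : K) - 1)⁻¹

/-- The embedding of the algebra into the quantum torus. -/
def theta (hp : (p : K) ≠ 1) : E p q l m →ₐ[K] QT p q l m :=
  EW.lift (mono (0, 1, 0, 0) 1) (ty p q l m) (mono (0, 0, 1, 0) 1) (mono (0, 0, 0, 1) 1)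
    (by
      have hp' := sub_ne_zero.mpr hp
      simp only [ty, mul_sub, sub_mul, mono_mul_mono, smul_sub, smul_mono, one_def]
      simp only [qb_apply, Prod.mk_add_mk]
      norm_num
      rw [mul_comm (p : K)]
      rw [show (((p : K) - 1)⁻¹ * p) = 1 + ((p : K) - 1)⁻¹ by field_simp; ring]
      ext d
      simp only [coeff_sub, coeff_mono, show (0 : Ex) = (0, 0, 0, 0) from rfl]
      split_ifs <;> ring)
    (by simp [mono_mul_mono, smul_mono, qb_apply])
    (by simp [mono_mul_mono, smul_mono, qb_apply])
    (by simp [ty, mul_sub, sub_mul, smul_sub, mono_mul_mono, smul_mono, qb_apply, mul_comm])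
    (by simp [mono_mul_mono, smul_mono, qb_apply])
    (by simp [ty, mul_sub, sub_mul, smul_sub, mono_mul_mono, smul_mono, qb_apply, mul_comm])

variable (hp : (p : K) ≠ 1)

@[simp] lemma theta_x : theta hp (gx p q l m) = mono (0, 1, 0, 0) 1 := lift_x
@[simp] lemma theta_y : theta hp (gy p q l m) = ty p q l m := lift_y
@[simp] lemma theta_s : theta hp (gs p q l m) = mono (0, 0, 1, 0) 1 := lift_s
@[simp] lemma theta_t : theta hp (gt p q l m) = mono (0, 0, 0, 1) 1 := lift_t
@[simp] lemma theta_z : theta hp (gz p q l m) = mono (1, 0, 0, 0) 1 := by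
  have hp' := sub_ne_zero.mpr hp
  rw [gz, map_sub, map_mul, map_mul, theta_x, theta_y]
  simp only [ty, mul_sub, sub_mul, mono_mul_mono]
  simp only [qb_apply, Prod.mk_add_mk]
  norm_num
  rw [show (((p : K) - 1)⁻¹ * p) = 1 + ((p : K) - 1)⁻¹ by field_simp; ring]
  ext d
  simp only [coeff_sub, coeff_mono]
  split_ifs <;> ring

/-! ### Constraints on the image of the embedding -/

lemma coeff_mul_mono' (f : QT p q l m) (d e : Ex) (c : K) :
    (f * mono d c).coeff e = c * f.coeff (e - d) * (qb p q l m).toFun (e - d) d := by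
  have := coeff_mul_mono d c f (e - d)
  rwa [sub_add_cancel] at this

/-- The functional `∑_k c_k z^k x^n s^a t^b + ⋯ ↦ ∑_k c_k`: the component of `x^n s^a t^b`,
evaluated at `z = 1`. -/
def ev (p q l m : Kˣ) (n a b : ℤ) : QT p q l m →ₗ[K] K :=
  (Finsupp.lsum K fun d : Ex => if d.2 = (n, a, b) then LinearMap.id else 0 : (Ex →₀ K) →ₗ[K] K)

lemma ev_mono (n a b : ℤ) (d : Ex) (c : K) :
    ev p q l m n a b (mono d c) = if d.2 = (n, a, b) then c else 0 := by
  refine (Finsupp.lsum_single _ _ _ _).trans ?_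
  split <;> rfl

/-- A subspace containing the image of the algebra: exponents of `z, s, t` are nonnegative, and
components of negative `x`-degree are divisible by `z - 1`. -/
def WW (p q l m : Kˣ) : Submodule K (QT p q l m) where
  carrier := {f | (∀ d : Ex, (d.1 < 0 ∨ d.2.2.1 < 0 ∨ d.2.2.2 < 0) → f.coeff d = 0) ∧
    ∀ n a b, n < 0 → ev p q l m n a b f = 0}
  add_mem' := by
    rintro f g ⟨h1, h2⟩ ⟨h3, h4⟩
    refine ⟨fun d hd => ?_, fun n a b hn => ?_⟩
    · rw [coeff_add, h1 d hd, h3 d hd, add_zero]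
    · rw [map_add, h2 n a b hn, h4 n a b hn, add_zero]
  zero_mem' := ⟨fun d _ => rfl, fun n a b _ => map_zero _⟩
  smul_mem' := by
    rintro c f ⟨h1, h2⟩
    refine ⟨fun d hd => ?_, fun n a b hn => ?_⟩
    · rw [coeff_smul, h1 d hd, mul_zero]
    · rw [map_smul, h2 n a b hn, smul_zero]

lemma ev_mul_x (f : QT p q l m) (n a b : ℤ) :
    ev p q l m n a b (f * mono (0, 1, 0, 0) 1) =
      ((l ^ a * m ^ b : Kˣ) : K) * ev p q l m (n - 1) a b f := by
  induction f using induction_mono with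
  | h0 => simp
  | ha f g hf hg => rw [add_mul, map_add, hf, hg, map_add, mul_add]
  | hs d c =>
    obtain ⟨k, n', a', b'⟩ := d
    rw [mono_mul_mono, ev_mono, ev_mono]
    simp only [Prod.mk_add_mk, add_zero, Prod.mk.injEq, eq_sub_iff_add_eq]
    split_ifs with h
    · obtain ⟨-, rfl, rfl⟩ := h
      simp [qb_apply]; ring
    · simp

lemma ev_mul_s (f : QT p q l m) (n a b : ℤ) :
    ev p q l m n a b (f * mono (0, 0, 1, 0) 1) =
      ((q ^ (-b) : Kˣ) : K) * ev p q l m n (a - 1) b f := by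
  induction f using induction_mono with
  | h0 => simp
  | ha f g hf hg => rw [add_mul, map_add, hf, hg, map_add, mul_add]
  | hs d c =>
    obtain ⟨k, n', a', b'⟩ := d
    rw [mono_mul_mono, ev_mono, ev_mono]
    simp only [Prod.mk_add_mk, add_zero, Prod.mk.injEq, eq_sub_iff_add_eq]
    split_ifs with h
    · obtain ⟨rfl, -, rfl⟩ := h
      simp [qb_apply]; ring
    · simp

lemma ev_mul_t (f : QT p q l m) (n a b : ℤ) :
    ev p q l m n a b (f * mono (0, 0, 0, 1) 1) = ev p q l m n a (b - 1) f := by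
  induction f using induction_mono with
  | h0 => simp
  | ha f g hf hg => rw [add_mul, map_add, hf, hg, map_add]
  | hs d c =>
    obtain ⟨k, n', a', b'⟩ := d
    rw [mono_mul_mono, ev_mono, ev_mono]
    simp only [Prod.mk_add_mk, add_zero, Prod.mk.injEq, eq_sub_iff_add_eq]
    split_ifs with h
    · simp [qb_apply]
    · simp

lemma ev_mul_y (f : QT p q l m) (n a b : ℤ) :
    ev p q l m n a b (f * ty p q l m) =
      ((l ^ (-a) * m ^ (-b) : Kˣ) : K) * ((p : K) - 1)⁻¹ * (((p ^ (n + 1) : Kˣ) : K) - 1) *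
        ev p q l m (n + 1) a b f := by
  induction f using induction_mono with
  | h0 => simp
  | ha f g hf hg => rw [add_mul, map_add, hf, hg, map_add, mul_add]
  | hs d c =>
    obtain ⟨k, n', a', b'⟩ := d
    rw [ty, mul_sub, map_sub, mono_mul_mono, mono_mul_mono, ev_mono, ev_mono, ev_mono]
    simp only [Prod.mk_add_mk, add_zero, Prod.mk.injEq, ← sub_eq_add_neg,
      sub_eq_iff_eq_add]
    split_ifs with h
    · obtain ⟨rfl, rfl, rfl⟩ := h
      simp [qb_apply]; ring
    · simp

lemma WW_mul_mono {f : QT p q l m}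
    (h : ∀ d : Ex, (d.1 < 0 ∨ d.2.2.1 < 0 ∨ d.2.2.2 < 0) → f.coeff d = 0) {e : Ex}
    (he : 0 ≤ e.1 ∧ 0 ≤ e.2.2.1 ∧ 0 ≤ e.2.2.2) (c : K) :
    ∀ d : Ex, (d.1 < 0 ∨ d.2.2.1 < 0 ∨ d.2.2.2 < 0) → (f * mono e c).coeff d = 0 := by
  intro d hd
  rw [coeff_mul_mono', h (d - e), mul_zero, zero_mul]
  simp only [Prod.fst_sub, Prod.snd_sub]
  lia

lemma WW_mul_theta (a : E p q l m) : ∀ f ∈ WW p q l m, f * theta hp a ∈ WW p q l m := by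
  induction a using induction_gens with
  | hc c =>
    intro f hf
    rw [AlgHom.commutes, ← Algebra.commutes, ← Algebra.smul_def]
    exact (WW p q l m).smul_mem c hf
  | hx =>
    rintro f ⟨h1, h2⟩
    rw [theta_x]
    refine ⟨WW_mul_mono h1 (by simp) _, fun n a b hn => ?_⟩
    rw [ev_mul_x, h2 _ _ _ (by lia), mul_zero]
  | hs =>
    rintro f ⟨h1, h2⟩
    rw [theta_s]
    refine ⟨WW_mul_mono h1 (by simp) _, fun n a b hn => ?_⟩
    rw [ev_mul_s, h2 _ _ _ hn, mul_zero]
  | ht =>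
    rintro f ⟨h1, h2⟩
    rw [theta_t]
    refine ⟨WW_mul_mono h1 (by simp) _, fun n a b hn => ?_⟩
    rw [ev_mul_t, h2 _ _ _ hn]
  | hy =>
    rintro f ⟨h1, h2⟩
    rw [theta_y]
    refine ⟨fun d hd => ?_, fun n a b hn => ?_⟩
    · rw [ty, mul_sub, coeff_sub, WW_mul_mono h1 (by simp) _ d hd,
        WW_mul_mono h1 (by simp) _ d hd, sub_zero]
    · rw [ev_mul_y]
      rcases (show n + 1 < 0 ∨ n + 1 = 0 by lia) with h | h
      · rw [h2 _ _ _ h, mul_zero]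
      · simp [h]
  | hadd a b ha hb =>
    intro f hf
    rw [map_add, mul_add]
    exact (WW p q l m).add_mem (ha f hf) (hb f hf)
  | hmul a b ha hb =>
    intro f hf
    rw [map_mul, ← mul_assoc]
    exact hb _ (ha f hf)

lemma theta_mem_WW (a : E p q l m) : theta hp a ∈ WW p q l m := by
  rw [← one_mul (theta hp a)]
  refine WW_mul_theta hp a 1 ⟨fun d hd => ?_, fun n a b hn => ?_⟩
  · rw [one_def, coeff_mono, if_neg]
    rintro rfl
    simp at hd
  · rw [one_def, ev_mono, if_neg]
    intro h
    have : (0 : ℤ) = n := congrArg Prod.fst h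
    lia

lemma theta_coeff_nonneg (u : E p q l m) {d : Ex} (hd : (theta hp u).coeff d ≠ 0) :
    0 ≤ d.1 ∧ 0 ≤ d.2.2.1 ∧ 0 ≤ d.2.2.2 := by
  by_contra h
  exact hd ((theta_mem_WW hp u).1 d (by lia))

end theta
end EW

/-! ### Poincaré–Birkhoff–Witt spanning and injectivity of the embedding -/

namespace EW

variable {K : Type*} [Field K] {p q l m : Kˣ}
open Tw

/-- The standard monomials `z^k x^n s^a t^b` for `n ≥ 0` and `z^k y^{-n} s^a t^b` for `n ≤ 0`. -/
def pbw (p q l m : Kˣ) (i : ℕ × ℤ × ℕ × ℕ) : E p q l m :=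
  gz p q l m ^ i.1 * (gx p q l m ^ i.2.1.toNat * gy p q l m ^ (-i.2.1).toNat) *
    gs p q l m ^ i.2.2.1 * gt p q l m ^ i.2.2.2

/-- The span of the standard monomials. -/
def Sp (p q l m : Kˣ) : Submodule K (E p q l m) := Submodule.span K (Set.range (pbw p q l m))

lemma mem_Sp_x (k n a b : ℕ) :
    gz p q l m ^ k * gx p q l m ^ n * gs p q l m ^ a * gt p q l m ^ b ∈ Sp p q l m := by
  refine Submodule.subset_span ⟨(k, n, a, b), ?_⟩
  simp [pbw]

lemma mem_Sp_y (k n a b : ℕ) :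
    gz p q l m ^ k * gy p q l m ^ n * gs p q l m ^ a * gt p q l m ^ b ∈ Sp p q l m := by
  refine Submodule.subset_span ⟨(k, -n, a, b), ?_⟩
  simp [pbw]

lemma Sp_induction {P : E p q l m → Prop} {v : E p q l m} (hv : v ∈ Sp p q l m)
    (hx : ∀ k n a b : ℕ,
      P (gz p q l m ^ k * gx p q l m ^ n * gs p q l m ^ a * gt p q l m ^ b))
    (hy : ∀ k n a b : ℕ,
      P (gz p q l m ^ k * gy p q l m ^ n * gs p q l m ^ a * gt p q l m ^ b))
    (h0 : P 0) (hadd : ∀ a b, P a → P b → P (a + b)) (hsmul : ∀ (c : K) a, P a → P (c • a)) :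
    P v := by
  refine Submodule.span_induction ?_ h0 (fun a b _ _ => hadd a b) (fun c a _ => hsmul c a) hv
  rintro _ ⟨⟨k, n, a, b⟩, rfl⟩
  rcases Int.le_total 0 n with hn | hn
  · have := hx k n.toNat a b
    simpa [pbw, Int.toNat_of_nonpos (show -n ≤ 0 by lia)] using this
  · have := hy k (-n).toNat a b
    simpa [pbw, Int.toNat_of_nonpos hn] using this

lemma Sp_mul_of_monomials {u : E p q l m}
    (hx : ∀ k n a b : ℕ,
      u * (gz p q l m ^ k * gx p q l m ^ n * gs p q l m ^ a * gt p q l m ^ b) ∈ Sp p q l m)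
    (hy : ∀ k n a b : ℕ,
      u * (gz p q l m ^ k * gy p q l m ^ n * gs p q l m ^ a * gt p q l m ^ b) ∈ Sp p q l m) :
    ∀ v ∈ Sp p q l m, u * v ∈ Sp p q l m := by
  intro v hv
  refine Sp_induction (P := fun v => u * v ∈ Sp p q l m) hv hx hy ?_ ?_ ?_
  · rw [mul_zero]; exact zero_mem _
  · intro a b ha hb; rw [mul_add]; exact add_mem ha hb
  · intro c a ha; rw [mul_smul_comm]; exact Submodule.smul_mem _ _ ha

lemma Sp_z_mul : ∀ v ∈ Sp p q l m, gz p q l m * v ∈ Sp p q l m := by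
  refine Sp_mul_of_monomials ?_ ?_ <;> intro k n a b
  · have := mem_Sp_x (p := p) (q := q) (l := l) (m := m) (k + 1) n a b
    rwa [pow_succ', mul_assoc (gz p q l m), mul_assoc (gz p q l m), mul_assoc (gz p q l m)] at this
  · have := mem_Sp_y (p := p) (q := q) (l := l) (m := m) (k + 1) n a b
    rwa [pow_succ', mul_assoc (gz p q l m), mul_assoc (gz p q l m), mul_assoc (gz p q l m)] at this

lemma Sp_zpow_mul (k : ℕ) : ∀ v ∈ Sp p q l m, gz p q l m ^ k * v ∈ Sp p q l m := by
  induction k with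
  | zero => intro v hv; simpa using hv
  | succ k ih => intro v hv; rw [pow_succ, mul_assoc]; exact ih _ (Sp_z_mul v hv)

/-- Moving a generator past a power of `z`. -/
lemma Sp_mul_zpow {u r : E p q l m} {c : K} (hu : u * gz p q l m = c • (gz p q l m * u))
    (h : u * r ∈ Sp p q l m) (k : ℕ) : u * (gz p q l m ^ k * r) ∈ Sp p q l m := by
  rw [← mul_assoc, mul_pow_of_qcomm hu, smul_mul_assoc, mul_assoc]
  exact Submodule.smul_mem _ _ (Sp_zpow_mul k _ h)

lemma Sp_x_mul (hp : (p : K) ≠ 1) : ∀ v ∈ Sp p q l m, gx p q l m * v ∈ Sp p q l m := by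
  refine Sp_mul_of_monomials ?_ ?_ <;> intro k n a b
  · rw [mul_assoc (_ ^ k), mul_assoc (_ ^ k)]
    refine Sp_mul_zpow x_mul_z ?_ k
    have := mem_Sp_x (p := p) (q := q) (l := l) (m := m) 0 (n + 1) a b
    rwa [pow_zero, one_mul, pow_succ', mul_assoc (gx p q l m), mul_assoc (gx p q l m)] at this
  · rw [mul_assoc (_ ^ k), mul_assoc (_ ^ k)]
    refine Sp_mul_zpow x_mul_z ?_ k
    cases n with
    | zero =>
      have := mem_Sp_x (p := p) (q := q) (l := l) (m := m) 0 1 a b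
      rw [pow_zero, one_mul, pow_one, mul_assoc] at this
      rwa [pow_zero, one_mul]
    | succ j =>
      have h0 := mem_Sp_y (p := p) (q := q) (l := l) (m := m) 0 j a b
      rw [pow_zero, one_mul] at h0
      rw [pow_succ', mul_assoc (gy p q l m), mul_assoc (gy p q l m), ← mul_assoc, x_mul_y' hp,
        smul_mul_assoc, sub_mul, smul_mul_assoc, one_mul]
      exact Submodule.smul_mem _ _ (sub_mem (Submodule.smul_mem _ _ (Sp_z_mul _ h0)) h0)

lemma Sp_y_mul (hp : (p : K) ≠ 1) : ∀ v ∈ Sp p q l m, gy p q l m * v ∈ Sp p q l m := by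
  refine Sp_mul_of_monomials ?_ ?_ <;> intro k n a b
  · rw [mul_assoc (_ ^ k), mul_assoc (_ ^ k)]
    refine Sp_mul_zpow y_mul_z ?_ k
    cases n with
    | zero =>
      have := mem_Sp_y (p := p) (q := q) (l := l) (m := m) 0 1 a b
      rw [pow_zero, one_mul, pow_one, mul_assoc] at this
      rwa [pow_zero, one_mul]
    | succ j =>
      have h0 := mem_Sp_x (p := p) (q := q) (l := l) (m := m) 0 j a b
      rw [pow_zero, one_mul] at h0
      rw [pow_succ', mul_assoc (gx p q l m), mul_assoc (gx p q l m), ← mul_assoc, y_mul_x hp,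
        smul_mul_assoc, sub_mul, one_mul]
      exact Submodule.smul_mem _ _ (sub_mem (Sp_z_mul _ h0) h0)
  · rw [mul_assoc (_ ^ k), mul_assoc (_ ^ k)]
    refine Sp_mul_zpow y_mul_z ?_ k
    have := mem_Sp_y (p := p) (q := q) (l := l) (m := m) 0 (n + 1) a b
    rwa [pow_zero, one_mul, pow_succ', mul_assoc (gy p q l m), mul_assoc (gy p q l m)] at this

lemma Sp_s_mul : ∀ v ∈ Sp p q l m, gs p q l m * v ∈ Sp p q l m := by
  have hz : gs p q l m * gz p q l m = (1 : K) • (gz p q l m * gs p q l m) := by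
    rw [s_mul_z, one_smul]
  refine Sp_mul_of_monomials ?_ ?_ <;> intro k n a b
  · rw [← mul_assoc, ← mul_assoc,
      mul_mul_of_qcomm (mul_pow_of_qcomm hz k) (mul_pow_of_qcomm s_mul_x n), smul_mul_assoc,
      smul_mul_assoc, mul_assoc _ (gs p q l m), ← pow_succ']
    exact Submodule.smul_mem _ _ (mem_Sp_x _ _ _ _)
  · rw [← mul_assoc, ← mul_assoc,
      mul_mul_of_qcomm (mul_pow_of_qcomm hz k) (mul_pow_of_qcomm s_mul_y n), smul_mul_assoc,
      smul_mul_assoc, mul_assoc _ (gs p q l m), ← pow_succ']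
    exact Submodule.smul_mem _ _ (mem_Sp_y _ _ _ _)

lemma Sp_t_mul : ∀ v ∈ Sp p q l m, gt p q l m * v ∈ Sp p q l m := by
  have hz : gt p q l m * gz p q l m = (1 : K) • (gz p q l m * gt p q l m) := by
    rw [t_mul_z, one_smul]
  refine Sp_mul_of_monomials ?_ ?_ <;> intro k n a b
  · rw [← mul_assoc, mul_mul_of_qcomm (mul_mul_of_qcomm (mul_pow_of_qcomm hz k)
      (mul_pow_of_qcomm t_mul_x n)) (mul_pow_of_qcomm t_mul_s a), smul_mul_assoc,
      mul_assoc _ (gt p q l m), ← pow_succ']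
    exact Submodule.smul_mem _ _ (mem_Sp_x _ _ _ _)
  · rw [← mul_assoc, mul_mul_of_qcomm (mul_mul_of_qcomm (mul_pow_of_qcomm hz k)
      (mul_pow_of_qcomm t_mul_y n)) (mul_pow_of_qcomm t_mul_s a), smul_mul_assoc,
      mul_assoc _ (gt p q l m), ← pow_succ']
    exact Submodule.smul_mem _ _ (mem_Sp_y _ _ _ _)

lemma mem_Sp (hp : (p : K) ≠ 1) (u : E p q l m) : u ∈ Sp p q l m := by
  have key : ∀ v ∈ Sp p q l m, u * v ∈ Sp p q l m := by
    induction u using induction_gens with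
    | hc c => intro v hv; rw [← Algebra.smul_def]; exact Submodule.smul_mem _ _ hv
    | hx => exact Sp_x_mul hp
    | hy => exact Sp_y_mul hp
    | hs => exact Sp_s_mul
    | ht => exact Sp_t_mul
    | hadd a b ha hb => intro v hv; rw [add_mul]; exact add_mem (ha v hv) (hb v hv)
    | hmul a b ha hb => intro v hv; rw [mul_assoc]; exact ha _ (hb v hv)
  have h1 := mem_Sp_x (p := p) (q := q) (l := l) (m := m) 0 0 0 0
  simp only [pow_zero, mul_one] at h1
  simpa using key 1 h1

/-- The exponent of the lowest term of a standard monomial. -/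
def emb (i : ℕ × ℤ × ℕ × ℕ) : Ex := (i.1, i.2.1, i.2.2.1, i.2.2.2)

lemma emb_injective : Function.Injective emb := by
  rintro ⟨k, n, a, b⟩ ⟨k', n', a', b'⟩ h
  simpa [emb] using h

lemma isLead_ty (hp : (p : K) ≠ 1) : IsLead (-lexHom) (ty p q l m) (0, -1, 0, 0) := by
  have hp' := sub_ne_zero.mpr hp
  refine ⟨by simpa [ty, coeff_mono] using hp', fun e he => ?_⟩
  rw [ty, coeff_sub, coeff_mono, coeff_mono] at he
  by_cases h1 : ((1, -1, 0, 0) : Ex) = e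
  · rw [← h1]; decide
  · by_cases h2 : ((0, -1, 0, 0) : Ex) = e
    · rw [← h2]
    · simp [h1, h2] at he

lemma isLead_pbw (hp : (p : K) ≠ 1) (i : ℕ × ℤ × ℕ × ℕ) :
    IsLead (-lexHom) (theta hp (pbw p q l m i)) (emb i) := by
  have hi := neg_lexHom_injective
  have h (d : Ex) := isLead_mono (β := qb p q l m) (-lexHom) (d := d) (one_ne_zero (α := K))
  have := (((((h (1, 0, 0, 0)).pow hi i.1).mul hi
    (((h (0, 1, 0, 0)).pow hi i.2.1.toNat).mul hi
      ((isLead_ty hp).pow hi (-i.2.1).toNat))).mul hi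
    ((h (0, 0, 1, 0)).pow hi i.2.2.1)).mul hi ((h (0, 0, 0, 1)).pow hi i.2.2.2))
  simp only [pbw, map_mul, map_pow, theta_x, theta_y, theta_z, theta_s, theta_t]
  convert this using 1
  obtain ⟨k, n, a, b⟩ := i
  simp [emb]
  lia

lemma theta_injective (hp : (p : K) ≠ 1) :
    Function.Injective (theta (q := q) (l := l) (m := m) hp) := by
  rw [injective_iff_map_eq_zero]
  intro u hu
  obtain ⟨c, hc⟩ := (Finsupp.mem_span_range_iff_exists_finsupp).mp (mem_Sp hp u)
  by_cases h0 : c = 0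
  · rw [← hc, h0, Finsupp.sum_zero_index]
  exfalso
  obtain ⟨i, hi, hmax⟩ := Finset.exists_max_image c.support (fun i => (-lexHom) (emb i))
    (Finsupp.support_nonempty_iff.mpr h0)
  have h1 : (theta hp u).coeff (emb i) =
      ∑ j ∈ c.support, c j * (theta hp (pbw p q l m j)).coeff (emb i) := by
    rw [← hc, Finsupp.sum, map_sum]
    let F : QT p q l m →+ K := ⟨⟨fun f => f.coeff (emb i), rfl⟩, fun _ _ => rfl⟩
    refine (map_sum F _ _).trans (Finset.sum_congr rfl fun j _ => ?_)
    rw [map_smul]; rfl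
  rw [hu, coeff_zero, Finset.sum_eq_single i] at h1
  · exact mul_ne_zero (Finsupp.mem_support_iff.mp hi) (isLead_pbw hp i).1 h1.symm
  · intro j hj hji
    by_contra hne
    have h2 := (isLead_pbw hp j).2 _ (right_ne_zero_of_mul hne)
    exact hji (emb_injective (neg_lexHom_injective (le_antisymm (hmax j hj) h2)))
  · intro h; exact absurd hi h

end EW

/-! ### Central and normal elements -/

namespace EW

variable {K : Type*} [Field K] {p q l m : Kˣ}
open Tw

lemma zpow_inj_of_not_root {u : Kˣ} (hu : ∀ n : ℕ, 0 < n → u ^ n ≠ 1) {a b : ℤ}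
    (h : u ^ a = u ^ b) : a = b := by
  refine (injective_zpow_iff_not_isOfFinOrder (x := u)).mpr ?_ h
  rw [isOfFinOrder_iff_pow_eq_one]
  rintro ⟨n, hn, h⟩
  exact hu n hn h

lemma ne_one_of_not_root {u : Kˣ} (hu : ∀ n : ℕ, 0 < n → u ^ n ≠ 1) : (u : K) ≠ 1 := by
  intro h
  exact hu 1 one_pos (by rw [pow_one]; exact Units.ext h)

/-- One-sided normality: `u A ⊆ A u`. -/
def RN {A : Type*} [Ring A] (u : A) : Prop := ∀ a, ∃ b, u * a = b * u

lemma RN_of_gens {u : E p q l m} {cx cy cs ct : K}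
    (hx : u * gx p q l m = cx • (gx p q l m * u)) (hy : u * gy p q l m = cy • (gy p q l m * u))
    (hs : u * gs p q l m = cs • (gs p q l m * u)) (ht : u * gt p q l m = ct • (gt p q l m * u)) :
    RN u := by
  intro a
  induction a using induction_gens with
  | hc c => exact ⟨_, (Algebra.commutes c u).symm⟩
  | hx => exact ⟨_, hx.trans (smul_mul_assoc _ _ _).symm⟩
  | hy => exact ⟨_, hy.trans (smul_mul_assoc _ _ _).symm⟩
  | hs => exact ⟨_, hs.trans (smul_mul_assoc _ _ _).symm⟩
  | ht => exact ⟨_, ht.trans (smul_mul_assoc _ _ _).symm⟩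
  | hadd a b ha hb =>
    obtain ⟨a', ha⟩ := ha
    obtain ⟨b', hb⟩ := hb
    exact ⟨a' + b', by rw [mul_add, ha, hb, add_mul]⟩
  | hmul a b ha hb =>
    obtain ⟨a', ha⟩ := ha
    obtain ⟨b', hb⟩ := hb
    exact ⟨a' * b', by rw [← mul_assoc, ha, mul_assoc, hb, mul_assoc]⟩

lemma RN_z : RN (gz p q l m) :=
  RN_of_gens z_mul_x z_mul_y (by rw [← s_mul_z, one_smul]) (by rw [← t_mul_z, one_smul])

lemma RN_s : RN (gs p q l m) :=
  RN_of_gens s_mul_x s_mul_y (by rw [one_smul]) s_mul_t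

lemma RN_t : RN (gt p q l m) :=
  RN_of_gens t_mul_x t_mul_y t_mul_s (by rw [one_smul])

lemma RN.map {A B : Type*} [Ring A] [Ring B] [Algebra K A] [Algebra K B] (φ : A ≃ₐ[K] B) {u : A}
    (hu : RN u) : RN (φ u) := by
  intro a
  obtain ⟨b, hb⟩ := hu (φ.symm a)
  refine ⟨φ b, ?_⟩
  rw [← map_mul, ← hb, map_mul, AlgEquiv.apply_symm_apply]

lemma mono_pow (d : Ex) (h : ∀ n : ℕ, (qb p q l m).toFun (n • d) d = 1) (n : ℕ) :
    (mono d 1 : QT p q l m) ^ n = mono (n • d) 1 := by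
  induction n with
  | zero => simp [one_def]
  | succ n ih => rw [pow_succ, ih, mono_mul_mono, h, succ_nsmul]; simp

lemma theta_monomial (hp : (p : K) ≠ 1) (k a b : ℕ) :
    theta hp (gz p q l m ^ k * gs p q l m ^ a * gt p q l m ^ b) =
      mono ((k : ℤ), (0 : ℤ), (a : ℤ), (b : ℤ)) 1 := by
  rw [map_mul, map_mul, map_pow, map_pow, map_pow, theta_z, theta_s, theta_t,
    mono_pow _ (by simp [qb_apply]), mono_pow _ (by simp [qb_apply]),
    mono_pow _ (by simp [qb_apply]), mono_mul_mono, mono_mul_mono]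
  simp [qb_apply]

/-- The bicharacter of the quantum torus is nondegenerate: an element whose monomials share
their commutation factors with `z, x, s, t` is a single monomial. -/
lemma eq_mono_of_commutation (hp : ∀ n : ℕ, 0 < n → p ^ n ≠ 1) (hq : ∀ n : ℕ, 0 < n → q ^ n ≠ 1)
    {f : QT p q l m} (hf : f ≠ 0)
    (h : ∀ d ∈ ({(1, 0, 0, 0), (0, 1, 0, 0), (0, 0, 1, 0), (0, 0, 0, 1)} : Set Ex), ∃ c : K,
      ∀ e, f.coeff e ≠ 0 → ((qb p q l m).toFun e d : K) = c * (qb p q l m).toFun d e) :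
    ∃ d c, c ≠ 0 ∧ f = mono d c := by
  obtain ⟨d, hd, -⟩ := exists_isLead lexHom hf
  refine ⟨d, f.coeff d, hd, ?_⟩
  have key : ∀ e, f.coeff e ≠ 0 → d = e := by
    intro e he
    obtain ⟨cz, hz⟩ := h (1, 0, 0, 0) (by simp)
    obtain ⟨cx, hx⟩ := h (0, 1, 0, 0) (by simp)
    obtain ⟨cs, hs⟩ := h (0, 0, 1, 0) (by simp)
    obtain ⟨ct, ht⟩ := h (0, 0, 0, 1) (by simp)
    have hz1 := hz d hd
    have hz2 := hz e he
    have hx1 := hx d hd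
    have hx2 := hx e he
    have hs1 := hs d hd
    have hs2 := hs e he
    have ht1 := ht d hd
    have ht2 := ht e he
    obtain ⟨k, n, a, b⟩ := d
    obtain ⟨k', n', a', b'⟩ := e
    simp only [qb_apply, mul_zero, mul_one, zero_mul, one_mul, zpow_zero, neg_zero,
      Units.val_one, Units.val_mul] at hz1 hz2 hx1 hx2 hs1 hs2 ht1 ht2
    have hn : n = n' := zpow_inj_of_not_root hp (Units.ext (hz1.trans hz2.symm))
    subst hn
    have hb : -b = -b' := zpow_inj_of_not_root hq (Units.ext (hs1.trans hs2.symm))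
    have ha : -a = -a' := by
      refine zpow_inj_of_not_root hq (Units.ext ?_)
      have hne : ct * ((m ^ n : Kˣ) : K) ≠ 0 := by
        intro h0; rw [← mul_assoc, h0, zero_mul] at ht1; exact one_ne_zero ht1
      refine mul_left_cancel₀ hne ?_
      rw [mul_assoc, mul_assoc, ← ht1, ← ht2]
    obtain rfl := neg_injective ha
    obtain rfl := neg_injective hb
    have hk : k = k' := by
      refine zpow_inj_of_not_root hp (Units.ext ?_)
      have hne : cx ≠ 0 := by
        rintro rfl
        rw [zero_mul] at hx1
        exact mul_ne_zero (Units.ne_zero _) (Units.ne_zero _) hx1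
      exact mul_left_cancel₀ hne (hx1.symm.trans hx2)
    rw [hk]
  ext e
  rw [coeff_mono]
  split_ifs with h1
  · rw [h1]
  · by_contra h2; exact h1 (key e h2)

lemma theta_eq_mono_of_RN (hp : ∀ n : ℕ, 0 < n → p ^ n ≠ 1) (hq : ∀ n : ℕ, 0 < n → q ^ n ≠ 1)
    {u : E p q l m} (h0 : u ≠ 0) (hu : RN u) :
    ∃ d c, c ≠ 0 ∧ theta (ne_one_of_not_root hp) u = mono d c := by
  have hp1 := ne_one_of_not_root hp
  have hf : theta hp1 u ≠ 0 := fun h => h0 (theta_injective hp1 (by rw [h, map_zero]))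
  have key : ∀ w d, theta hp1 w = (mono d 1 : QT p q l m) → ∃ c : K, ∀ e,
      (theta hp1 u).coeff e ≠ 0 →
        ((qb p q l m).toFun e d : K) = c * (qb p q l m).toFun d e := by
    intro w d hw
    obtain ⟨b, hb⟩ := hu w
    refine commutation_of_normal lexHom_injective hf (g := theta hp1 b) ?_
    rw [← hw, ← map_mul, hb, map_mul]
  refine eq_mono_of_commutation hp hq hf ?_
  rintro d (rfl | rfl | rfl | rfl)
  · exact key _ _ (theta_z hp1)
  · exact key _ _ (theta_x hp1)
  · exact key _ _ (theta_s hp1)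
  · exact key _ _ (theta_t hp1)

/-- Every nonzero normal element is a scalar multiple of a monomial `z^k s^a t^b`. -/
lemma normal_form (hp : ∀ n : ℕ, 0 < n → p ^ n ≠ 1) (hq : ∀ n : ℕ, 0 < n → q ^ n ≠ 1)
    {u : E p q l m} (h0 : u ≠ 0) (hu : RN u) :
    ∃ c : K, c ≠ 0 ∧ ∃ k a b : ℕ,
      u = c • (gz p q l m ^ k * gs p q l m ^ a * gt p q l m ^ b) := by
  have hp1 := ne_one_of_not_root hp
  obtain ⟨⟨k, n, a, b⟩, c, hc, h⟩ := theta_eq_mono_of_RN hp hq h0 hu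
  -- `u y = g u` forces `g` to be proportional to `(p^n z - 1) x⁻¹`; as `g` has `x`-degree `-1`,
  -- it is divisible by `z - 1`, so `p^n = 1`
  have hn : n = 0 := by
    obtain ⟨g, hg⟩ := hu (gy p q l m)
    set κ : K := ((p : K) - 1)⁻¹ * ((p ^ k * l ^ (-a) * m ^ (-b) : Kˣ) : K) with hκ
    have hg' := congrArg (theta hp1) hg
    rw [map_mul, map_mul, h, theta_y] at hg'
    have hG : theta hp1 g =
        mono (1, -1, 0, 0) (κ * ((p ^ n : Kˣ) : K)) - mono (0, -1, 0, 0) κ := by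
      have h1 : theta hp1 g * mono (k, n, a, b) c =
          (mono (1, -1, 0, 0) (κ * ((p ^ n : Kˣ) : K)) - mono (0, -1, 0, 0) κ) *
            mono (k, n, a, b) c := by
        rw [← hg', ty, mul_sub, sub_mul, mono_mul_mono, mono_mul_mono, mono_mul_mono,
          mono_mul_mono, add_comm (k, n, a, b), add_comm (k, n, a, b)]
        have hpk : (p : K) ^ k ≠ 0 := zpow_ne_zero _ p.ne_zero
        congr 2
        · simp [qb_apply, hκ]; field_simp
        · simp [qb_apply, hκ]; field_simp
      ext e
      have h2 := coeff_mul_mono (β := qb p q l m) (k, n, a, b) c (theta hp1 g) e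
      rw [h1, coeff_mul_mono] at h2
      exact (mul_left_cancel₀ hc (mul_right_cancel₀ (Units.ne_zero _) h2)).symm
    have h3 := (theta_mem_WW hp1 g).2 (-1) 0 0 (by norm_num)
    rw [hG, map_sub, ev_mono, ev_mono, if_pos rfl, if_pos rfl] at h3
    have hκ0 : κ ≠ 0 := mul_ne_zero (inv_ne_zero (sub_ne_zero.mpr hp1)) (Units.ne_zero _)
    have h4 : ((p ^ n : Kˣ) : K) = 1 := by
      refine mul_left_cancel₀ hκ0 ?_
      rw [mul_one]; exact sub_eq_zero.mp h3
    refine zpow_inj_of_not_root hp (Units.ext ?_)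
    rw [h4]; simp
  subst hn
  obtain ⟨h1, h2, h3⟩ := theta_coeff_nonneg hp1 u (d := (k, 0, a, b))
    (by rw [h, coeff_mono, if_pos rfl]; exact hc)
  simp only at h1 h2 h3
  lift k to ℕ using h1
  lift a to ℕ using h2
  lift b to ℕ using h3
  refine ⟨c, hc, k, a, b, theta_injective hp1 ?_⟩
  rw [h, map_smul, theta_monomial, smul_mono, mul_one]

lemma center_eq (hp : ∀ n : ℕ, 0 < n → p ^ n ≠ 1) (hq : ∀ n : ℕ, 0 < n → q ^ n ≠ 1)
    {u : E p q l m} (hu : ∀ a, u * a = a * u) : ∃ c : K, u = algebraMap K _ c := by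
  have hp1 := ne_one_of_not_root hp
  by_cases h0 : u = 0
  · exact ⟨0, by rw [h0, map_zero]⟩
  obtain ⟨c, hc, k, a, b, rfl⟩ := normal_form hp hq h0 fun a => ⟨a, hu a⟩
  have key : ∀ w d, theta hp1 w = (mono d 1 : QT p q l m) →
      (qb p q l m).toFun ((k : ℤ), (0 : ℤ), (a : ℤ), (b : ℤ)) d =
        (qb p q l m).toFun d ((k : ℤ), (0 : ℤ), (a : ℤ), (b : ℤ)) := by
    intro w d hw
    have h1 := congrArg (fun v => (theta hp1 v).coeff 
      ((((k : ℤ), (0 : ℤ), (a : ℤ), (b : ℤ)) : Ex) + d)) (hu w)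
    simp only [map_mul (theta hp1) (_ • _), map_mul (theta hp1) w, map_smul, theta_monomial, hw,
      smul_mono, mono_mul_mono, add_comm d, coeff_mono, if_pos] at h1
    simp only [mul_one, one_mul] at h1
    exact Units.ext (mul_left_cancel₀ hc h1)
  have hx := key _ _ (theta_x hp1)
  have hs := key _ _ (theta_s hp1)
  have ht := key _ _ (theta_t hp1)
  simp only [qb_apply, mul_zero, mul_one, zero_mul, one_mul, zpow_zero, neg_zero] at hx hs ht
  have hb : -(b : ℤ) = 0 := zpow_inj_of_not_root hq (by rw [hs, zpow_zero])
  have ha : -(a : ℤ) = 0 := zpow_inj_of_not_root hq (by rw [← ht, zpow_zero])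
  have ha' : a = 0 := by lia
  have hb' : b = 0 := by lia
  subst ha' hb'
  have hk : (k : ℤ) = 0 := zpow_inj_of_not_root hp (by rw [← hx]; simp)
  have hk' : k = 0 := by lia
  subst hk'
  exact ⟨c, by simp [Algebra.algebraMap_eq_smul_one]⟩

end EW

/-! ### Isomorphisms permute the lines spanned by `z`, `s`, `t` -/

namespace EW

variable {K : Type*} [Field K] {p q l m : Kˣ}
open Tw

lemma mono_ne_zero {d : Ex} {c : K} (hc : c ≠ 0) : (mono d c : QT p q l m) ≠ 0 := by
  intro h
  have := congrArg (fun f => f.coeff d) h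
  rw [coeff_mono, if_pos rfl] at this
  exact hc this

lemma mono_inj {d e : Ex} {c c' : K} (hc : c ≠ 0) (h : (mono d c : QT p q l m) = mono e c') :
    d = e := by
  by_contra hne
  have := congrArg (fun f => f.coeff d) h
  simp only [coeff_mono, if_pos] at this
  split_ifs at this with h1
  · exact hne h1.symm
  · exact hc this

/-- `u` is a nonzero multiple of a monomial of total degree `N` in `z, s, t` (the exponent of `x`
is disregarded). -/
def IsMon (hp : (p : K) ≠ 1) (u : E p q l m) (N : ℤ) : Prop :=
  ∃ (d : Ex) (c : K), c ≠ 0 ∧ d.1 + d.2.2.1 + d.2.2.2 = N ∧ theta hp u = mono d c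

section IsMon
variable {hp : (p : K) ≠ 1} {u v : E p q l m} {M N : ℤ}

lemma IsMon.ne_zero (h : IsMon hp u N) : u ≠ 0 := by
  rintro rfl
  obtain ⟨d, c, hc, -, h⟩ := h
  rw [map_zero] at h
  exact mono_ne_zero hc h.symm

lemma IsMon.unique (h : IsMon hp u M) (h' : IsMon hp u N) : M = N := by
  obtain ⟨d, c, hc, rfl, h⟩ := h
  obtain ⟨d', c', hc', rfl, h'⟩ := h'
  rw [mono_inj hc (h.symm.trans h')]

lemma IsMon.mul (h : IsMon hp u M) (h' : IsMon hp v N) : IsMon hp (u * v) (M + N) := by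
  obtain ⟨d, c, hc, rfl, h⟩ := h
  obtain ⟨d', c', hc', rfl, h'⟩ := h'
  refine ⟨d + d', _, ?_, ?_, by rw [map_mul, h, h', mono_mul_mono]⟩
  · exact mul_ne_zero (mul_ne_zero hc hc') (Units.ne_zero _)
  · simp only [Prod.fst_add, Prod.snd_add]; ring

lemma IsMon.smul (h : IsMon hp u M) {a : K} (ha : a ≠ 0) : IsMon hp (a • u) M := by
  obtain ⟨d, c, hc, rfl, h⟩ := h
  exact ⟨d, a * c, mul_ne_zero ha hc, rfl, by rw [map_smul, h, smul_mono]⟩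

lemma isMon_one : IsMon hp (1 : E p q l m) 0 := ⟨0, 1, one_ne_zero, rfl, by rw [map_one, one_def]⟩

lemma IsMon.pow (h : IsMon hp u M) (n : ℕ) : IsMon hp (u ^ n) (n * M) := by
  induction n with
  | zero => simpa using isMon_one
  | succ n ih =>
    rw [pow_succ, show ((n + 1 : ℕ) : ℤ) * M = n * M + M by push_cast; ring]
    exact ih.mul h

lemma isMon_z : IsMon hp (gz p q l m) 1 := ⟨_, 1, one_ne_zero, by simp, theta_z hp⟩
lemma isMon_s : IsMon hp (gs p q l m) 1 := ⟨_, 1, one_ne_zero, by simp, theta_s hp⟩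
lemma isMon_t : IsMon hp (gt p q l m) 1 := ⟨_, 1, one_ne_zero, by simp, theta_t hp⟩
end IsMon

variable {p' q' l' m' : Kˣ}

lemma isMon_map_pos (hp : ∀ n : ℕ, 0 < n → p ^ n ≠ 1) (hq : ∀ n : ℕ, 0 < n → q ^ n ≠ 1)
    {hp' : (p' : K) ≠ 1} (φ : E p' q' l' m' ≃ₐ[K] E p q l m) {w : E p' q' l' m'} (hw : RN w)
    (hw1 : IsMon hp' w 1) : ∃ N : ℤ, 1 ≤ N ∧ IsMon (ne_one_of_not_root hp) (φ w) N := by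
  obtain ⟨c, hc, k, a, b, h⟩ := normal_form hp hq
    ((map_ne_zero_iff φ φ.injective).mpr hw1.ne_zero) (hw.map φ)
  refine ⟨k * 1 + a * 1 + b * 1, ?_, ?_⟩
  · by_contra hlt
    obtain ⟨rfl, rfl, rfl⟩ : k = 0 ∧ a = 0 ∧ b = 0 := by lia
    -- `φ w` is a scalar, hence so is `w`
    have h2 : w = c • (1 : E p' q' l' m') := by
      apply φ.injective
      rw [h, map_smul, map_one]; simp
    rw [h2] at hw1
    exact zero_ne_one ((isMon_one.smul hc).unique hw1)
  · rw [h]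
    exact (((isMon_z.pow k).mul (isMon_s.pow a)).mul (isMon_t.pow b)).smul hc

/-- Among the normal elements, `z`, `s`, `t` are up to scalars the irreducible ones; an
isomorphism therefore maps each of them to a multiple of one of them. -/
lemma map_atom (hp : ∀ n : ℕ, 0 < n → p ^ n ≠ 1) (hq : ∀ n : ℕ, 0 < n → q ^ n ≠ 1)
    (hp' : ∀ n : ℕ, 0 < n → p' ^ n ≠ 1) (hq' : ∀ n : ℕ, 0 < n → q' ^ n ≠ 1)
    (φ : E p q l m ≃ₐ[K] E p' q' l' m') {w : E p q l m} (hw : RN w)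
    (hw1 : IsMon (ne_one_of_not_root hp) w 1) :
    ∃ c : K, c ≠ 0 ∧ (φ w = c • gz p' q' l' m' ∨ φ w = c • gs p' q' l' m' ∨
      φ w = c • gt p' q' l' m') := by
  obtain ⟨c, hc, k, a, b, h⟩ := normal_form hp' hq'
    ((map_ne_zero_iff φ φ.injective).mpr hw1.ne_zero) (hw.map φ)
  refine ⟨c, hc, ?_⟩
  have hp1' := ne_one_of_not_root hp'
  obtain ⟨dz, hz1, hz⟩ := isMon_map_pos hp hq (hp' := hp1') φ.symm RN_z isMon_z
  obtain ⟨ds, hs1, hs⟩ := isMon_map_pos hp hq (hp' := hp1') φ.symm RN_s isMon_s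
  obtain ⟨dt, ht1, ht⟩ := isMon_map_pos hp hq (hp' := hp1') φ.symm RN_t isMon_t
  have h2 : w = c • (φ.symm (gz p' q' l' m') ^ k * φ.symm (gs p' q' l' m') ^ a *
      φ.symm (gt p' q' l' m') ^ b) := by
    apply φ.injective
    rw [h]; simp
  have h3 := (((hz.pow k).mul (hs.pow a)).mul (ht.pow b)).smul hc
  rw [← h2] at h3
  have h4 := h3.unique hw1
  have e1 : (k : ℤ) ≤ k * dz := le_mul_of_one_le_right (by lia) hz1
  have e2 : (a : ℤ) ≤ a * ds := le_mul_of_one_le_right (by lia) hs1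
  have e3 : (b : ℤ) ≤ b * dt := le_mul_of_one_le_right (by lia) ht1
  have e4 : ¬ (k = 0 ∧ a = 0 ∧ b = 0) := by
    rintro ⟨rfl, rfl, rfl⟩
    simp at h4
  obtain ⟨rfl, rfl, rfl⟩ | ⟨rfl, rfl, rfl⟩ | ⟨rfl, rfl, rfl⟩ :
      (k = 1 ∧ a = 0 ∧ b = 0) ∨ (k = 0 ∧ a = 1 ∧ b = 0) ∨ (k = 0 ∧ a = 0 ∧ b = 1) := by lia
  · left; simpa using h
  · right; left; simpa using h
  · right; right; simpa using h

lemma ts_ne_zero (hp : (p : K) ≠ 1) : gt p q l m * gs p q l m ≠ 0 :=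
  ((isMon_t (hp := hp)).mul isMon_s).ne_zero

lemma s_t_not_comm (hp : (p : K) ≠ 1) (hq : (q : K) ≠ 1) {c c' : K} (hc : c ≠ 0) (hc' : c' ≠ 0) :
    (c • gs p q l m) * (c' • gt p q l m) ≠ (c' • gt p q l m) * (c • gs p q l m) := by
  intro h
  rw [smul_mul_smul_comm, smul_mul_smul_comm, s_mul_t, smul_smul, mul_comm c' c] at h
  have h1 : (c * c' * q - c * c') • (gt p q l m * gs p q l m) = 0 := by
    rw [sub_smul, h, sub_self]
  have h2 := (smul_eq_zero.mp h1).resolve_right (ts_ne_zero hp)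
  rw [← mul_sub_one] at h2
  exact mul_ne_zero (mul_ne_zero hc hc') (sub_ne_zero.mpr hq) h2

/-- An isomorphism preserves the line of `z`, which is the only one of the three lines commuting
with the other two. -/
lemma map_zst (hp : ∀ n : ℕ, 0 < n → p ^ n ≠ 1) (hq : ∀ n : ℕ, 0 < n → q ^ n ≠ 1)
    (hp' : ∀ n : ℕ, 0 < n → p' ^ n ≠ 1) (hq' : ∀ n : ℕ, 0 < n → q' ^ n ≠ 1)
    (φ : E p q l m ≃ₐ[K] E p' q' l' m') :
    ∃ c₁ c₂ c₃ : K, c₁ ≠ 0 ∧ c₂ ≠ 0 ∧ c₃ ≠ 0 ∧ φ (gz p q l m) = c₁ • gz p' q' l' m' ∧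
      ((φ (gs p q l m) = c₂ • gs p' q' l' m' ∧ φ (gt p q l m) = c₃ • gt p' q' l' m') ∨
       (φ (gs p q l m) = c₂ • gt p' q' l' m' ∧ φ (gt p q l m) = c₃ • gs p' q' l' m')) := by
  have hp1 := ne_one_of_not_root hp
  have hp1' := ne_one_of_not_root hp'
  have hq1' := ne_one_of_not_root hq'
  obtain ⟨c₁, h1, hz⟩ := map_atom hp hq hp' hq' φ RN_z isMon_z
  obtain ⟨c₂, h2, hs⟩ := map_atom hp hq hp' hq' φ RN_s isMon_s
  obtain ⟨c₃, h3, ht⟩ := map_atom hp hq hp' hq' φ RN_t isMon_t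
  have hst : φ (gs p q l m) * φ (gt p q l m) ≠ φ (gt p q l m) * φ (gs p q l m) := by
    rw [← map_mul, ← map_mul]
    intro h
    have := s_t_not_comm (l := l) (m := m) hp1 (ne_one_of_not_root hq) one_ne_zero one_ne_zero
    simp only [one_smul] at this
    exact this (φ.injective h)
  have hsz : φ (gs p q l m) * φ (gz p q l m) = φ (gz p q l m) * φ (gs p q l m) := by
    rw [← map_mul, s_mul_z, map_mul]
  have htz : φ (gt p q l m) * φ (gz p q l m) = φ (gz p q l m) * φ (gt p q l m) := by
    rw [← map_mul, t_mul_z, map_mul]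
  have comm : ∀ {c c' : K} {u v : E p' q' l' m'}, u * v = v * u →
      (c • u) * (c' • v) = (c' • v) * (c • u) := by
    intro c c' u v h
    rw [smul_mul_smul_comm, smul_mul_smul_comm, h, mul_comm c]
  have nc : ∀ {c c' : K}, c ≠ 0 → c' ≠ 0 → (c • gs p' q' l' m') * (c' • gt p' q' l' m') ≠
      (c' • gt p' q' l' m') * (c • gs p' q' l' m') := s_t_not_comm hp1' hq1'
  refine ⟨c₁, c₂, c₃, h1, h2, h3, ?_⟩
  rcases hs with hs | hs | hs <;> rcases ht with ht | ht | ht <;> rw [hs, ht] at hst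
  · exact absurd rfl (fun h => hst (comm h))
  · exact absurd (comm s_mul_z.symm) hst
  · exact absurd (comm t_mul_z.symm) hst
  · exact absurd (comm s_mul_z) hst
  · exact absurd rfl (fun h => hst (comm h))
  · rcases hz with hz | hz | hz
    · exact ⟨hz, Or.inl ⟨hs, ht⟩⟩
    · rw [ht, hz] at htz; exact absurd htz.symm (nc h1 h3)
    · rw [hs, hz] at hsz; exact absurd hsz (nc h2 h1)
  · exact absurd (comm t_mul_z) hst
  · rcases hz with hz | hz | hz
    · exact ⟨hz, Or.inr ⟨hs, ht⟩⟩
    · rw [hs, hz] at hsz; exact absurd hsz.symm (nc h1 h2)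
    · rw [ht, hz] at htz; exact absurd htz (nc h3 h1)
  · exact absurd rfl (fun h => hst (comm h))

/-! ### Comparison of the parameters -/

/-- If a nonzero `X` commutes with `z, s, t` up to the factors `α, β, γ`, then these are the factors
of any monomial `z^k x^n s^a t^b` in the support of its image in the quantum torus. -/
lemma support_factors (hp : (p : K) ≠ 1) {X : E p q l m} (hX : X ≠ 0) {α β γ : Kˣ}
    (hz : gz p q l m * X = (α : K) • (X * gz p q l m))
    (hs : gs p q l m * X = (β : K) • (X * gs p q l m))
    (ht : gt p q l m * X = (γ : K) • (X * gt p q l m)) :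
    ∃ (n : ℤ) (a b : ℕ), α = p ^ (-n) ∧ β = l ^ n * q ^ (b : ℤ) ∧ γ = m ^ n * q ^ (-(a : ℤ)) := by
  have hf : theta hp X ≠ 0 := fun h => hX (theta_injective hp (by rw [h, map_zero]))
  obtain ⟨e, he, -⟩ := exists_isLead lexHom hf
  have key : ∀ w d (c : Kˣ), theta hp w = (mono d 1 : QT p q l m) → w * X = (c : K) • (X * w) →
      (qb p q l m).toFun d e = c * (qb p q l m).toFun e d := by
    intro w d c hw h
    have h1 := congrArg (fun v => (theta hp v).coeff (d + e)) h
    simp only [map_mul, map_smul, hw] at h1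
    rw [coeff_smul, coeff_mono_mul, add_comm d e, coeff_mul_mono, one_mul] at h1
    refine Units.ext (mul_left_cancel₀ he ?_)
    rw [h1, Units.val_mul]; ring
  have h1 := key _ _ _ (theta_z hp) hz
  have h2 := key _ _ _ (theta_s hp) hs
  have h3 := key _ _ _ (theta_t hp) ht
  obtain ⟨-, ha, hb⟩ := theta_coeff_nonneg hp X he
  obtain ⟨k, n, a, b⟩ := e
  simp only at ha hb
  lift a to ℕ using ha
  lift b to ℕ using hb
  simp only [qb_apply, mul_zero, mul_one, zero_mul, one_mul, zpow_zero, neg_zero] at h1 h2 h3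
  refine ⟨n, a, b, ?_, ?_, ?_⟩
  · rw [zpow_neg]; exact eq_inv_of_mul_eq_one_left h1.symm
  · rw [h2]; simp
  · rw [h3]

/-- Comparison of the parameters along an isomorphism preserving the lines of `z`, `s`, `t`: the
image of `x` consists of monomials of a single `x`-degree `n` and, as the image of `y` has degree
`-n`, the exponents of `s` and `t` vanish. -/
lemma params_of_std (hp' : ∀ n : ℕ, 0 < n → p' ^ n ≠ 1)
    (hp : (p : K) ≠ 1) (hq' : ∀ n : ℕ, 0 < n → q' ^ n ≠ 1)
    (φ : E p q l m ≃ₐ[K] E p' q' l' m') {c₁ c₂ c₃ : K} (h1 : c₁ ≠ 0) (h2 : c₂ ≠ 0) (h3 : c₃ ≠ 0)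
    (hz : φ (gz p q l m) = c₁ • gz p' q' l' m') (hs : φ (gs p q l m) = c₂ • gs p' q' l' m')
    (ht : φ (gt p q l m) = c₃ • gt p' q' l' m') :
    q = q' ∧ ∃ n : ℤ, p = p' ^ n ∧ l = l' ^ n ∧ m = m' ^ n := by
  have hp1' := ne_one_of_not_root hp'
  have tr : ∀ {w X : E p q l m} {w' : E p' q' l' m'} {c α : K}, c ≠ 0 → φ w = c • w' →
      w * X = α • (X * w) → w' * φ X = α • (φ X * w') := by
    intro w X w' c α hc hw h
    have := congrArg φ h
    rw [map_mul, map_smul, map_mul, hw, smul_mul_assoc, mul_smul_comm, smul_comm] at this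
    exact smul_right_injective _ hc this
  have hx0 : gx p q l m ≠ 0 := by
    intro h
    have := theta_x (q := q) (l := l) (m := m) hp
    rw [h, map_zero] at this
    exact mono_ne_zero one_ne_zero this.symm
  have hy0 : gy p q l m ≠ 0 := by
    intro h
    have := isMon_z (q := q) (l := l) (m := m) (hp := hp) |>.ne_zero
    rw [gz, h, mul_zero, zero_mul, sub_zero] at this
    exact this rfl
  obtain ⟨n, a, b, e1, e2, e3⟩ := support_factors hp1'
    ((map_ne_zero_iff φ φ.injective).mpr hx0) (α := p⁻¹) (β := l) (γ := m)
    (tr h1 hz (by rw [z_mul_x, Units.val_inv_eq_inv_val])) (tr h2 hs s_mul_x) (tr h3 ht t_mul_x)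
  obtain ⟨n', a', b', f1, f2, f3⟩ := support_factors hp1'
    ((map_ne_zero_iff φ φ.injective).mpr hy0) (α := p) (β := l⁻¹) (γ := m⁻¹)
    (tr h1 hz z_mul_y) (tr h2 hs (by rw [s_mul_y, Units.val_inv_eq_inv_val]))
    (tr h3 ht (by rw [t_mul_y, Units.val_inv_eq_inv_val]))
  have e1' : p = p' ^ n := by rw [zpow_neg] at e1; exact inv_injective e1
  have hn : n' = -n := by
    have := zpow_inj_of_not_root hp' (e1'.symm.trans f1); lia
  subst hn
  have hb : (b : ℤ) + b' = 0 := by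
    refine zpow_inj_of_not_root hq' ?_
    have : l * l⁻¹ = 1 := mul_inv_cancel l
    rw [f2] at this
    rw [e2, zpow_neg] at this
    rw [zpow_zero, zpow_add, ← this, mul_mul_mul_comm, mul_inv_cancel, one_mul]
  have ha : -(a : ℤ) + -a' = 0 := by
    refine zpow_inj_of_not_root hq' ?_
    have : m * m⁻¹ = 1 := mul_inv_cancel m
    rw [f3] at this
    rw [e3, zpow_neg m'] at this
    rw [zpow_zero, zpow_add, ← this, mul_mul_mul_comm, mul_inv_cancel, one_mul]
  obtain rfl : b = 0 := by lia
  obtain rfl : a = 0 := by lia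
  refine ⟨?_, n, e1', by simpa using e2, by simpa using e3⟩
  have h4 := tr h2 hs s_mul_t
  rw [ht, mul_smul_comm, s_mul_t, smul_mul_assoc, smul_comm (q : K)] at h4
  have h5 := smul_right_injective _ h3 h4
  refine (Units.ext (smul_left_injective K (ts_ne_zero hp1') h5)).symm

lemma params_std (hp : ∀ n : ℕ, 0 < n → p ^ n ≠ 1) (hq : ∀ n : ℕ, 0 < n → q ^ n ≠ 1)
    (hp' : ∀ n : ℕ, 0 < n → p' ^ n ≠ 1) (hq' : ∀ n : ℕ, 0 < n → q' ^ n ≠ 1)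
    (φ : E p q l m ≃ₐ[K] E p' q' l' m') {c₁ c₂ c₃ : K} (h1 : c₁ ≠ 0) (h2 : c₂ ≠ 0) (h3 : c₃ ≠ 0)
    (hz : φ (gz p q l m) = c₁ • gz p' q' l' m') (hs : φ (gs p q l m) = c₂ • gs p' q' l' m')
    (ht : φ (gt p q l m) = c₃ • gt p' q' l' m') :
    (p = p' ∧ q = q' ∧ l = l' ∧ m = m') ∨ (p = p'⁻¹ ∧ q = q' ∧ l = l'⁻¹ ∧ m = m'⁻¹) := by
  obtain ⟨e, n, e1, e2, e3⟩ :=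
    params_of_std hp' (ne_one_of_not_root hp) hq' φ h1 h2 h3 hz hs ht
  have inv : ∀ {w : E p q l m} {w' : E p' q' l' m'} {c : K}, c ≠ 0 → φ w = c • w' →
      φ.symm w' = c⁻¹ • w := by
    intro w w' c hc h
    rw [AlgEquiv.symm_apply_eq, map_smul, h, smul_smul, inv_mul_cancel₀ hc, one_smul]
  obtain ⟨-, n', f1, -, -⟩ := params_of_std hp (ne_one_of_not_root hp') hq φ.symm
    (inv_ne_zero h1) (inv_ne_zero h2) (inv_ne_zero h3) (inv h1 hz) (inv h2 hs) (inv h3 ht)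
  have hn : n' * n = 1 := by
    refine zpow_inj_of_not_root hp ?_
    rw [zpow_mul, ← f1, ← e1, zpow_one]
  rcases Int.eq_one_or_neg_one_of_mul_eq_one' hn with ⟨-, rfl⟩ | ⟨-, rfl⟩
  · rw [zpow_one] at e1 e2 e3
    exact Or.inl ⟨e1, e, e2, e3⟩
  · rw [zpow_neg_one] at e1 e2 e3
    exact Or.inr ⟨e1, e, e2, e3⟩

/-- Classification of the algebras themselves. -/
lemma params_of_equiv (hp : ∀ n : ℕ, 0 < n → p ^ n ≠ 1) (hq : ∀ n : ℕ, 0 < n → q ^ n ≠ 1)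
    (hp' : ∀ n : ℕ, 0 < n → p' ^ n ≠ 1) (hq' : ∀ n : ℕ, 0 < n → q' ^ n ≠ 1)
    (φ : E p q l m ≃ₐ[K] E p' q' l' m') :
    (p = p' ∧ q = q' ∧ l = l' ∧ m = m') ∨ (p = p'⁻¹ ∧ q = q' ∧ l = l'⁻¹ ∧ m = m'⁻¹) ∨
    (p = p' ∧ q = q'⁻¹ ∧ l = m' ∧ l' = m) ∨ (p = p'⁻¹ ∧ q = q'⁻¹ ∧ l = m'⁻¹ ∧ l' = m⁻¹) := by
  obtain ⟨c₁, c₂, c₃, h1, h2, h3, hz, ⟨hs, ht⟩ | ⟨hs, ht⟩⟩ := map_zst hp hq hp' hq' φ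
  · rcases params_std hp hq hp' hq' φ h1 h2 h3 hz hs ht with h | h
    · exact Or.inl h
    · exact Or.inr (Or.inl h)
  · have hq'' : ∀ n : ℕ, 0 < n → q'⁻¹ ^ n ≠ 1 := by
      intro n hn h
      rw [inv_pow, inv_eq_one] at h
      exact hq' n hn h
    rcases params_std hp hq hp' hq'' (φ.trans (swapSTEquiv rfl)) h1 h2 h3
      (by rw [AlgEquiv.trans_apply, hz]; simp [swapSTEquiv, swapST, gz, lift_x, lift_y])
      (by simp [hs, swapSTEquiv, swapST, lift_t])
      (by simp [ht, swapSTEquiv, swapST, lift_s]) with ⟨a, b, c, d⟩ | ⟨a, b, c, d⟩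
    · exact Or.inr (Or.inr (Or.inl ⟨a, b, c, d.symm⟩))
    · exact Or.inr (Or.inr (Or.inr ⟨a, b, c, by rw [d, inv_inv]⟩))

end EW

/-! ### Cancellation of the polynomial variable -/

namespace EW

section Cancel
variable {K A B : Type*} [Field K] [Ring A] [Ring B] [Algebra K A] [Algebra K B]
open Polynomial

/-- Evaluation of polynomials over a noncommutative algebra at a scalar. -/
def evAt (A : Type*) [Ring A] [Algebra K A] (c : K) : A[X] →ₐ[K] A :=
  eval₂AlgHom (AlgHom.id K A) (algebraMap K A c) fun a => (Algebra.commutes c a).symm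

lemma evAt_C (c : K) (a : A) : evAt A c (C a) = a := eval₂_C _ _
lemma evAt_X (c : K) : evAt A c X = algebraMap K A c := eval₂_X _ _

/-- If the center of `B` is `K`, the center of `B[X]` is `K[X]`. -/
lemma exists_map_eq_of_central (hB : ∀ u : B, (∀ b, u * b = b * u) → ∃ c, u = algebraMap K B c)
    {f : B[X]} (hf : ∀ g, f * g = g * f) : ∃ P : K[X], f = mapAlgHom (Algebra.ofId K B) P := by
  have h : ∀ n, ∃ c, f.coeff n = algebraMap K B c := by
    intro n
    refine hB _ fun b => ?_
    rw [← coeff_mul_C, hf, coeff_C_mul]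
  choose c hc using h
  refine ⟨∑ i ∈ f.support, monomial i (c i), ?_⟩
  rw [map_sum]
  conv_lhs => rw [f.as_sum_support]
  refine Finset.sum_congr rfl fun i _ => ?_
  rw [mapAlgHom_monomial, hc]
  rfl

/-- Algebras with center `K` and isomorphic polynomial extensions are isomorphic: the isomorphism
restricts to an automorphism `X ↦ a X + b` of the common center `K[X]`, and one passes to the
quotients by `a X + b` and `X`. -/
lemma nonempty_equiv_of_polynomial [Nontrivial A]
    (hA : ∀ u : A, (∀ b, u * b = b * u) → ∃ c, u = algebraMap K A c)
    (hB : ∀ u : B, (∀ b, u * b = b * u) → ∃ c, u = algebraMap K B c)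
    (Φ : A[X] ≃ₐ[K] B[X]) : Nonempty (A ≃ₐ[K] B) := by
  obtain ⟨P, hP⟩ := exists_map_eq_of_central hB (f := Φ X) fun g => by
    rw [← Φ.apply_symm_apply g, ← map_mul, X_mul, map_mul]
  obtain ⟨Q, hQ⟩ := exists_map_eq_of_central hA (f := Φ.symm X) fun g => by
    rw [← Φ.symm_apply_apply g, ← map_mul, X_mul, map_mul]
  have hmap : ∀ (D : Type _) [Ring D] [Algebra K D] (R : K[X]),
      mapAlgHom (Algebra.ofId K D) R = aeval X R := by
    intro D _ _ R
    have : mapAlgHom (Algebra.ofId K D) = aeval X := by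
      refine algHom_ext ?_
      simp
    rw [this]
  have hcomp : P.comp Q = X := by
    have h1 : mapAlgHom (Algebra.ofId K A) (P.comp Q) = mapAlgHom (Algebra.ofId K A) X := by
      have h2 : Φ.symm (Φ X) = X := Φ.symm_apply_apply X
      rw [hP, hmap B] at h2
      have h3 : Φ.symm (aeval X P) = aeval (Φ.symm X) P := (aeval_algHom_apply Φ.symm X P).symm
      rw [h3, hQ, aeval_algHom_apply] at h2
      rw [comp_eq_aeval, h2]
      simp
    refine map_injective (algebraMap K A) (algebraMap K A).injective ?_
    exact h1
  have hdeg : P.natDegree = 1 := by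
    have := congrArg natDegree hcomp
    rw [natDegree_comp, natDegree_X] at this
    exact Nat.eq_one_of_mul_eq_one_right this
  obtain ⟨a, ha, b, rfl⟩ := natDegree_eq_one.mp hdeg
  have hΦX : Φ X = a • X + C (algebraMap K B b) := by
    have hC : ∀ d : K, mapAlgHom (Algebra.ofId K B) (C d) = C (algebraMap K B d) := fun d => map_C _
    have hX : mapAlgHom (Algebra.ofId K B) X = X := map_X _
    rw [hP, map_add, map_mul, hC, hC, hX, Algebra.smul_def]
    rfl
  -- the root of `a X + b`
  set c : K := -(a⁻¹ * b) with hc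
  set α : A →ₐ[K] B := ((evAt B c).comp (Φ : A[X] →ₐ[K] B[X])).comp CAlgHom with hα
  set β : B →ₐ[K] A := ((evAt A (0 : K)).comp (Φ.symm : B[X] →ₐ[K] A[X])).comp CAlgHom with hβ
  have e1 : (evAt B c).comp (Φ : A[X] →ₐ[K] B[X]) = α.comp (evAt A (0 : K)) := by
    refine algHom_ext' (AlgHom.ext fun u => ?_) ?_
    · simp [hα, evAt_C]
    · have h1 : evAt B c (Φ X) = 0 := by
        rw [hΦX, map_add, map_smul, evAt_X, evAt_C, Algebra.smul_def, ← map_mul, ← map_add, hc,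
          mul_neg, mul_inv_cancel_left₀ ha, neg_add_cancel, map_zero]
      simp [h1, evAt_X]
  have e2 : (evAt A (0 : K)).comp (Φ.symm : B[X] →ₐ[K] A[X]) = β.comp (evAt B c) := by
    refine algHom_ext' (AlgHom.ext fun u => ?_) ?_
    · simp [hβ, evAt_C]
    · have h1 : a • Φ.symm X + C (algebraMap K A b) = X := by
        apply Φ.injective
        rw [hΦX, map_add, map_smul, Φ.apply_symm_apply]
        congr 1
        exact Φ.commutes b
      have h2 := congrArg (evAt A (0 : K)) h1
      rw [map_add, map_smul, evAt_C, evAt_X, map_zero] at h2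
      have h3 : evAt A (0 : K) (Φ.symm X) = algebraMap K A c := by
        rw [add_eq_zero_iff_eq_neg] at h2
        have h4 := congrArg (fun v => a⁻¹ • v) h2
        simp only [smul_smul, inv_mul_cancel₀ ha, one_smul] at h4
        rw [h4, hc, map_neg, map_mul, smul_neg, Algebra.smul_def]
      simp [evAt_X, h3]
  refine ⟨AlgEquiv.ofAlgHom α β (AlgHom.ext fun u => ?_) (AlgHom.ext fun u => ?_)⟩
  · have h1 : β u = evAt A (0 : K) (Φ.symm (C u)) := rfl
    have h2 := DFunLike.congr_fun e1 (Φ.symm (C u))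
    simp only [AlgHom.comp_apply] at h2 ⊢
    rw [h1, ← h2]
    simp [evAt_C]
  · have h1 : α u = evAt B c (Φ (C u)) := rfl
    have h2 := DFunLike.congr_fun e2 (Φ (C u))
    simp only [AlgHom.comp_apply] at h2 ⊢
    rw [h1, ← h2]
    simp [evAt_C]

end Cancel

variable {K : Type*} [Field K] {p q l m p' q' l' m' : Kˣ}

lemma classification (hp : ∀ n : ℕ, 0 < n → p ^ n ≠ 1) (hq : ∀ n : ℕ, 0 < n → q ^ n ≠ 1)
    (hp' : ∀ n : ℕ, 0 < n → p' ^ n ≠ 1) (hq' : ∀ n : ℕ, 0 < n → q' ^ n ≠ 1) :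
    Nonempty (Polynomial (E p q l m) ≃ₐ[K] Polynomial (E p' q' l' m')) ↔
    (p = p' ∧ q = q' ∧ l = l' ∧ m = m') ∨ (p = p'⁻¹ ∧ q = q' ∧ l = l'⁻¹ ∧ m = m'⁻¹) ∨
    (p = p' ∧ q = q'⁻¹ ∧ l = m' ∧ l' = m) ∨ (p = p'⁻¹ ∧ q = q'⁻¹ ∧ l = m'⁻¹ ∧ l' = m⁻¹) := by
  constructor
  · rintro ⟨Φ⟩
    have hp1 := ne_one_of_not_root hp
    have : Nontrivial (E p q l m) := ⟨gz p q l m, 0, (isMon_z (hp := hp1)).ne_zero⟩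
    obtain ⟨φ⟩ := nonempty_equiv_of_polynomial (fun u hu => center_eq hp hq hu)
      (fun u hu => center_eq hp' hq' hu) Φ
    exact params_of_equiv hp hq hp' hq' φ
  · rintro (⟨rfl, rfl, rfl, rfl⟩ | ⟨h1, rfl, h2, h3⟩ | ⟨rfl, h1, rfl, rfl⟩ | ⟨h1, h2, h3, h4⟩)
    · exact ⟨AlgEquiv.refl⟩
    · exact ⟨Polynomial.mapAlgEquiv (swapXYEquiv (by rw [h1, inv_inv]) (by rw [h2, inv_inv])
        (by rw [h3, inv_inv]))⟩
    · exact ⟨Polynomial.mapAlgEquiv (swapSTEquiv (by rw [h1, inv_inv]))⟩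
    · exact ⟨Polynomial.mapAlgEquiv ((swapSTEquiv (q' := q') (by rw [h2, inv_inv])).trans
        (swapXYEquiv (by rw [h1, inv_inv]) h4 (by rw [h3, inv_inv])))⟩

end EW

/-- Assume none of `p₁, p₂, q₁, q₂` is a root of unity. Then the polynomial
extensions `A_{p₁}(λ₁, μ₁, K_{q₁}[s₁,t₁])[w]` and `A_{p₂}(λ₂, μ₂, K_{q₂}[s₂,t₂])[w]` are
isomorphic as `K`-algebras iff one of the four listed conditions on the parameters holds. -/
theorem extWeyl_polynomial_isomorphism_classification
    (K : Type*) [Field K] (p₁ q₁ lam₁ mu₁ p₂ q₂ lam₂ mu₂ : K)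
    (hp₁ : p₁ ≠ 0) (hq₁ : q₁ ≠ 0) (hlam₁ : lam₁ ≠ 0) (hmu₁ : mu₁ ≠ 0)
    (hp₂ : p₂ ≠ 0) (hq₂ : q₂ ≠ 0) (hlam₂ : lam₂ ≠ 0) (hmu₂ : mu₂ ≠ 0)
    (hpru₁ : ∀ n : ℕ, 0 < n → p₁ ^ n ≠ 1) (hqru₁ : ∀ n : ℕ, 0 < n → q₁ ^ n ≠ 1)
    (hpru₂ : ∀ n : ℕ, 0 < n → p₂ ^ n ≠ 1) (hqru₂ : ∀ n : ℕ, 0 < n → q₂ ^ n ≠ 1) :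
    Nonempty (Polynomial (ExtWeyl K p₁ q₁ lam₁ mu₁) ≃ₐ[K] Polynomial (ExtWeyl K p₂ q₂ lam₂ mu₂)) ↔
      (p₁ = p₂ ∧ q₁ = q₂ ∧ lam₁ = lam₂ ∧ mu₁ = mu₂) ∨
      (p₁ = p₂⁻¹ ∧ q₁ = q₂ ∧ lam₁ = lam₂⁻¹ ∧ mu₁ = mu₂⁻¹) ∨
      (p₁ = p₂ ∧ q₁ = q₂⁻¹ ∧ lam₁ = mu₂ ∧ lam₂ = mu₁) ∨
      (p₁ = p₂⁻¹ ∧ q₁ = q₂⁻¹ ∧ lam₁ = mu₂⁻¹ ∧ lam₂ = mu₁⁻¹) := by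
  have aux : ∀ u : Kˣ, (∀ n : ℕ, 0 < n → (u : K) ^ n ≠ 1) → ∀ n : ℕ, 0 < n → u ^ n ≠ 1 :=
    fun u h n hn e => h n hn (by rw [← Units.val_pow_eq_pow_val, e, Units.val_one])
  lift p₁ to Kˣ using hp₁.isUnit
  lift q₁ to Kˣ using hq₁.isUnit
  lift lam₁ to Kˣ using hlam₁.isUnit
  lift mu₁ to Kˣ using hmu₁.isUnit
  lift p₂ to Kˣ using hp₂.isUnit
  lift q₂ to Kˣ using hq₂.isUnit
  lift lam₂ to Kˣ using hlam₂.isUnit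
  lift mu₂ to Kˣ using hmu₂.isUnit
  have h := EW.classification (l := lam₁) (m := mu₁) (l' := lam₂) (m' := mu₂)
    (aux _ hpru₁) (aux _ hqru₁) (aux _ hpru₂) (aux _ hqru₂)
  simp only [← Units.val_inv_eq_inv_val, Units.val_inj]
  exact h
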